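/- For j = 1,2, let c_j be a wave speed (for the same constant c0 > 0), let f_j ∈ C²([0,∞)) be not identically zero with supp f_j ⊂ (0,1), and let u_j be a classical solution of the half-line wave problem for (c_j, f_j) that decays exponentially near the boundary region. If u_1(t,1) = u_2(t,1) for all t ≥ 0, then f_1 = f_2 and c_1 = c_2. -/

import Mathlib

open Set

/-- `c` is a wave speed for the constant `c0 > 0`: a positive `C²` function on `[0,∞)`
equal to `c0` outside `(0,1)`. -/
def IsWaveSpeed (c0 : ℝ) (c : ℝ → ℝ) : Prop :=
  ContDiffOn ℝ 2 c (Ici 0) ∧ (∀ x ∈ Ici (0:ℝ), 0 < c x) ∧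
    ∀ x ∈ Ici (0:ℝ), x ∉ Ioo (0:ℝ) 1 → c x = c0

/-- `u` is a classical solution of the half-line wave problem for `(c, f)`. -/
def IsWaveSolution (c : ℝ → ℝ) (f : ℝ → ℝ) (u : ℝ → ℝ → ℝ) : Prop :=
  ContDiffOn ℝ 2 (Function.uncurry u) (Ici 0 ×ˢ Ici 0) ∧
  (∀ t > (0:ℝ), ∀ x > (0:ℝ),
      deriv (fun s => deriv (fun r => u r x) s) t
        = (c x)^2 * deriv (fun y => deriv (fun w => u t w) y) x) ∧
  (∀ x ∈ Ici (0:ℝ), u 0 x = f x) ∧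
  (∀ x ∈ Ici (0:ℝ), derivWithin (fun s => u s x) (Ici 0) 0 = 0) ∧
  (∀ t ∈ Ici (0:ℝ), u t 0 = 0)

/-- `u` decays exponentially near the boundary region `[0,1]`. -/
def DecaysExp (u : ℝ → ℝ → ℝ) : Prop :=
  ∃ C > (0:ℝ), ∃ κ > (0:ℝ), ∀ t ∈ Ici (0:ℝ), ∀ x ∈ Icc (0:ℝ) 1,
    |u t x| + |derivWithin (fun y => u t y) (Ici 0) x| ≤ C * Real.exp (-κ * t)


/-- power series coefficients (in the spectral parameter) of the solution of `y'' = z r y`. -/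
noncomputable def co (r : ℝ → ℝ) (α β : ℝ) : ℕ → ℝ → ℝ
  | 0 => fun x => α + β * (x - 1)
  | n+1 => fun x => ∫ t in (1:ℝ)..x, ∫ s in (1:ℝ)..t, r s * co r α β n s

/-- derivatives in `x` of the coefficients. -/
noncomputable def cod (r : ℝ → ℝ) (α β : ℝ) : ℕ → ℝ → ℝ
  | 0 => fun _ => β
  | n+1 => fun x => ∫ s in (1:ℝ)..x, r s * co r α β n s

lemma prim_deriv {g : ℝ → ℝ} (hg : Continuous g) (x : ℝ) :
    HasDerivAt (fun x => ∫ s in (1:ℝ)..x, g s) (g x) x :=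
  (hg.integral_hasStrictDerivAt 1 x).hasDerivAt

lemma prim_cont {g : ℝ → ℝ} (hg : Continuous g) :
    Continuous (fun x => ∫ s in (1:ℝ)..x, g s) :=
  continuous_iff_continuousAt.2 fun x => (prim_deriv hg x).continuousAt

lemma co_cont {r : ℝ → ℝ} (hr : Continuous r) (α β : ℝ) : ∀ n, Continuous (co r α β n)
  | 0 => by unfold co; fun_prop
  | n+1 => by
    have h := co_cont hr α β n
    show Continuous (fun x => ∫ t in (1:ℝ)..x, ∫ s in (1:ℝ)..t, r s * co r α β n s)
    exact prim_cont (prim_cont (hr.mul h))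

lemma cod_cont {r : ℝ → ℝ} (hr : Continuous r) (α β : ℝ) : ∀ n, Continuous (cod r α β n)
  | 0 => by unfold cod; fun_prop
  | n+1 => by
    show Continuous (fun x => ∫ s in (1:ℝ)..x, r s * co r α β n s)
    exact prim_cont (hr.mul (co_cont hr α β n))

lemma co_deriv {r : ℝ → ℝ} (hr : Continuous r) (α β : ℝ) (n : ℕ) (x : ℝ) :
    HasDerivAt (co r α β n) (cod r α β n x) x := by
  cases n with
  | zero =>
    show HasDerivAt (fun x => α + β * (x - 1)) β x
    simpa using (((hasDerivAt_id x).sub_const 1).const_mul β).const_add α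
  | succ n => exact prim_deriv (cod_cont hr α β (n+1)) x

lemma cod_deriv {r : ℝ → ℝ} (hr : Continuous r) (α β : ℝ) (n : ℕ) (x : ℝ) :
    HasDerivAt (cod r α β (n+1)) (r x * co r α β n x) x :=
  prim_deriv (hr.mul (co_cont hr α β n)) x

lemma volterra {g : ℝ → ℝ} (hg : Continuous g) {C : ℝ} {k : ℕ}
    (h : ∀ t ∈ Icc (0:ℝ) 1, |g t| ≤ C * ((1 - t)^k / (k.factorial : ℝ))) (x : ℝ)
    (hx : x ∈ Icc (0:ℝ) 1) :
    |∫ t in (1:ℝ)..x, g t| ≤ C * ((1 - x)^(k+1) / ((k+1).factorial : ℝ)) := by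
  have hd : ∀ y, HasDerivAt (fun y : ℝ => - (C * ((1 - y)^(k+1) / ((k+1).factorial : ℝ))))
      (C * ((1 - y)^k / (k.factorial : ℝ))) y := by
    intro y
    have h1 := (((((hasDerivAt_id y).const_sub 1).pow (k+1)).div_const
      ((k+1).factorial : ℝ)).const_mul C).neg
    refine h1.congr_deriv ?_
    have : (k.factorial : ℝ) ≠ 0 := by positivity
    simp [Nat.factorial_succ]
    field_simp
  have hi : ∫ t in x..1, C * ((1 - t)^k / (k.factorial : ℝ))
      = C * ((1 - x)^(k+1) / ((k+1).factorial : ℝ)) := by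
    rw [intervalIntegral.integral_eq_sub_of_hasDerivAt (fun y _ => hd y)]
    · simp
    · exact (by fun_prop : Continuous _).intervalIntegrable _ _
  rw [intervalIntegral.integral_symm, abs_neg, ← hi]
  refine (intervalIntegral.abs_integral_le_integral_abs hx.2).trans ?_
  refine intervalIntegral.integral_mono_on hx.2 (hg.abs.intervalIntegrable _ _)
    ((by fun_prop : Continuous _).intervalIntegrable _ _) ?_
  intro t ht
  exact h t ⟨hx.1.trans ht.1, ht.2⟩

lemma co_bound {r : ℝ → ℝ} (hr : Continuous r) (α β : ℝ) {B : ℝ}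
    (hM : ∀ t ∈ Icc (0:ℝ) 1, |r t| ≤ B^2) (n : ℕ) :
    (∀ x ∈ Icc (0:ℝ) 1, |co r α β n x| ≤
      (|α| + |β|) * (B^2)^n * ((1 - x)^(2*n) / ((2*n).factorial : ℝ))) ∧
    (∀ x ∈ Icc (0:ℝ) 1, |cod r α β (n+1) x| ≤
      (|α| + |β|) * (B^2)^(n+1) * ((1 - x)^(2*n+1) / ((2*n+1).factorial : ℝ))) := by
  have step : ∀ n, (∀ x ∈ Icc (0:ℝ) 1, |co r α β n x| ≤
      (|α| + |β|) * (B^2)^n * ((1 - x)^(2*n) / ((2*n).factorial : ℝ))) →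
    (∀ x ∈ Icc (0:ℝ) 1, |cod r α β (n+1) x| ≤
      (|α| + |β|) * (B^2)^(n+1) * ((1 - x)^(2*n+1) / ((2*n+1).factorial : ℝ))) := by
    intro n h x hx
    refine volterra (hr.mul (co_cont hr α β n)) ?_ x hx
    intro t ht
    rw [Pi.mul_apply, abs_mul]
    have h1 := mul_le_mul (hM t ht) (h t ht) (abs_nonneg _) (sq_nonneg B)
    refine h1.trans (le_of_eq ?_)
    ring
  have main : ∀ n, (∀ x ∈ Icc (0:ℝ) 1, |co r α β n x| ≤
      (|α| + |β|) * (B^2)^n * ((1 - x)^(2*n) / ((2*n).factorial : ℝ))) := by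
    intro n
    induction n with
    | zero =>
      intro x hx
      have : |x - 1| ≤ 1 := by rw [abs_le]; constructor <;> linarith [hx.1, hx.2]
      have h2 : |α + β * (x-1)| ≤ |α| + |β| := by
        refine (abs_add_le _ _).trans ?_
        rw [abs_mul]
        nlinarith [abs_nonneg β]
      simpa [co] using h2
    | succ n ih =>
      intro x hx
      exact volterra (cod_cont hr α β (n+1)) (step n ih) x hx
  exact ⟨main n, step n (main n)⟩

lemma co_bound' {r : ℝ → ℝ} (hr : Continuous r) (α β : ℝ) {B : ℝ}
    (hM : ∀ t ∈ Icc (0:ℝ) 1, |r t| ≤ B^2) (n : ℕ) {x : ℝ} (hx : x ∈ Icc (0:ℝ) 1) :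
    |co r α β n x| ≤ (|α| + |β|) * ((B^2)^n / ((2*n).factorial : ℝ)) := by
  refine ((co_bound hr α β hM n).1 x hx).trans ?_
  rw [mul_assoc, mul_div_assoc']
  have h1 : (1 - x)^(2*n) ≤ 1 := pow_le_one₀ (by linarith [hx.2]) (by linarith [hx.1])
  gcongr
  have : 0 ≤ (B^2)^n := by positivity
  nlinarith

lemma cod_bound' {r : ℝ → ℝ} (hr : Continuous r) (α β : ℝ) {B : ℝ}
    (hM : ∀ t ∈ Icc (0:ℝ) 1, |r t| ≤ B^2) (n : ℕ) {x : ℝ} (hx : x ∈ Icc (0:ℝ) 1) :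
    |cod r α β (n+1) x| ≤ (|α| + |β|) * ((B^2)^(n+1) / ((2*n).factorial : ℝ)) := by
  refine ((co_bound hr α β hM n).2 x hx).trans ?_
  rw [mul_assoc, mul_div_assoc']
  have h1 : (1 - x)^(2*n+1) ≤ 1 := pow_le_one₀ (by linarith [hx.2]) (by linarith [hx.1])
  have : 0 ≤ (B^2)^(n+1) := by positivity
  gcongr
  · nlinarith
  · omega

lemma sum_aux (B w : ℝ) : Summable (fun n : ℕ => w^(2*n) * ((B^2)^n / ((2*n).factorial : ℝ))) ∧
    (0 ≤ B * w → ∑' n : ℕ, w^(2*n) * ((B^2)^n / ((2*n).factorial : ℝ)) ≤ Real.exp (B * w)) := by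
  have h0 : (fun n : ℕ => w^(2*n) * ((B^2)^n / ((2*n).factorial : ℝ)))
      = fun n : ℕ => (B*w)^(2*n) / ((2*n).factorial : ℝ) := by
    ext n; rw [mul_pow, ← pow_mul]; ring
  rw [h0]
  have h1 := Real.hasSum_cosh (B*w)
  refine ⟨h1.summable, fun h => ?_⟩
  rw [h1.tsum_eq, Real.cosh_eq]
  have : Real.exp (-(B*w)) ≤ Real.exp (B*w) := Real.exp_le_exp.2 (by linarith)
  linarith

lemma sum_aux2 (B z : ℝ) : Summable (fun n : ℕ => |z|^n * ((B^2)^n / ((2*n).factorial : ℝ))) := by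
  have := (sum_aux B (Real.sqrt |z|)).1
  refine this.congr fun n => ?_
  rw [pow_mul, Real.sq_sqrt (abs_nonneg z)]

/-- complex solution -/
noncomputable def psC (r : ℝ → ℝ) (α β : ℝ) (z : ℂ) (x : ℝ) : ℂ :=
  ∑' n, z^n * (co r α β n x : ℂ)
/-- real solution -/
noncomputable def psR (r : ℝ → ℝ) (α β : ℝ) (z : ℝ) (x : ℝ) : ℝ :=
  ∑' n, z^n * co r α β n x
/-- derivative of the real solution -/
noncomputable def psD (r : ℝ → ℝ) (α β : ℝ) (z : ℝ) (x : ℝ) : ℝ :=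
  ∑' n, z^n * cod r α β n x

/-- solutions of `y'' = z r y` on `[0,1]`, with derivative. -/
structure Sol (r : ℝ → ℝ) (z : ℝ) (y y' : ℝ → ℝ) : Prop where
  c0 : ContinuousOn y (Icc 0 1)
  c1 : ContinuousOn y' (Icc 0 1)
  d0 : ∀ x ∈ Ioo (0:ℝ) 1, HasDerivAt y (y' x) x
  d1 : ∀ x ∈ Ioo (0:ℝ) 1, HasDerivAt y' (z * r x * y x) x

lemma psC_ofReal (r : ℝ → ℝ) (α β : ℝ) (z x : ℝ) : psC r α β z x = (psR r α β z x : ℂ) := by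
  unfold psC psR
  push_cast
  rfl

lemma ps_sol {r : ℝ → ℝ} (hr : Continuous r) (α β : ℝ) {B : ℝ}
    (hM : ∀ t ∈ Icc (0:ℝ) 1, |r t| ≤ B^2) (z : ℝ) :
    Sol r z (psR r α β z) (psD r α β z) ∧ psR r α β z 1 = α ∧ psD r α β z 1 = β := by
  have hs := (sum_aux2 B z).mul_left (|α| + |β|)
  have b0 : ∀ n, ∀ x ∈ Icc (0:ℝ) 1, ‖z^n * co r α β n x‖ ≤
      (|α| + |β|) * (|z|^n * ((B^2)^n / ((2*n).factorial : ℝ))) := by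
    intro n x hx
    rw [norm_mul, norm_pow, Real.norm_eq_abs, Real.norm_eq_abs]
    have := mul_le_mul_of_nonneg_left (co_bound' hr α β hM n hx) (by positivity : 0 ≤ |z|^n)
    refine this.trans (le_of_eq (by ring))
  have hs1 : Summable (fun n : ℕ => |z| * B^2 * ((|α| + |β|) * (|z|^n * ((B^2)^n / ((2*n).factorial : ℝ))))) :=
    hs.mul_left _
  have b1 : ∀ n, ∀ x ∈ Icc (0:ℝ) 1, ‖z^(n+1) * cod r α β (n+1) x‖ ≤
      |z| * B^2 * ((|α| + |β|) * (|z|^n * ((B^2)^n / ((2*n).factorial : ℝ)))) := by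
    intro n x hx
    rw [norm_mul, norm_pow, Real.norm_eq_abs, Real.norm_eq_abs]
    have := mul_le_mul_of_nonneg_left (cod_bound' hr α β hM n hx) (by positivity : 0 ≤ |z|^(n+1))
    refine this.trans (le_of_eq (by ring))
  -- full bound for derivatives
  set v : ℕ → ℝ := fun n => match n with
    | 0 => |β|
    | n+1 => |z| * B^2 * ((|α| + |β|) * (|z|^n * ((B^2)^n / ((2*n).factorial : ℝ)))) with hv
  have hvs : Summable v := (summable_nat_add_iff 1).1 hs1
  have b1' : ∀ n, ∀ x ∈ Icc (0:ℝ) 1, ‖z^n * cod r α β n x‖ ≤ v n := by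
    intro n x hx
    cases n with
    | zero => simp [hv, cod]
    | succ n => exact b1 n x hx
  have b2 : ∀ n, ∀ x ∈ Icc (0:ℝ) 1, ‖z^(n+1) * (r x * co r α β n x)‖ ≤
      |z| * B^2 * ((|α| + |β|) * (|z|^n * ((B^2)^n / ((2*n).factorial : ℝ)))) := by
    intro n x hx
    have h1 := b0 n x hx
    have h2 := hM x hx
    have : z^(n+1) * (r x * co r α β n x) = z * (r x * (z^n * co r α β n x)) := by ring
    rw [this, norm_mul, norm_mul, mul_assoc, Real.norm_eq_abs z, Real.norm_eq_abs (r x)]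
    gcongr
  set v2 : ℕ → ℝ := fun n => match n with
    | 0 => 0
    | n+1 => |z| * B^2 * ((|α| + |β|) * (|z|^n * ((B^2)^n / ((2*n).factorial : ℝ)))) with hv2
  have hvs2 : Summable v2 := (summable_nat_add_iff 1).1 hs1
  set g2 : ℕ → ℝ → ℝ := fun n x => match n with
    | 0 => 0
    | n+1 => z^(n+1) * (r x * co r α β n x) with hg2
  have b2' : ∀ n, ∀ x ∈ Icc (0:ℝ) 1, ‖g2 n x‖ ≤ v2 n := by
    intro n x hx
    cases n with
    | zero => simp [hv2, hg2]
    | succ n => exact b2 n x hx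
  have half : (1/2:ℝ) ∈ Ioo (0:ℝ) 1 := by norm_num
  have half' : (1/2:ℝ) ∈ Icc (0:ℝ) 1 := by norm_num
  refine ⟨⟨?_, ?_, ?_, ?_⟩, ?_, ?_⟩
  · exact continuousOn_tsum (fun n => (continuous_const.mul (co_cont hr α β n)).continuousOn) hs b0
  · exact continuousOn_tsum (fun n => (continuous_const.mul (cod_cont hr α β n)).continuousOn) hvs b1'
  · intro x hx
    refine hasDerivAt_tsum_of_isPreconnected hvs isOpen_Ioo isPreconnected_Ioo
      (fun n y _ => (co_deriv hr α β n y).const_mul _)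
      (fun n y hy => b1' n y (Ioo_subset_Icc_self hy)) half
      (Summable.of_norm_bounded hs (fun n => b0 n _ half')) hx
  · intro x hx
    have h1 : HasDerivAt (fun x => ∑' n, z^n * cod r α β n x) (∑' n, g2 n x) x := by
      refine hasDerivAt_tsum_of_isPreconnected hvs2 isOpen_Ioo isPreconnected_Ioo
        (fun n y hy => ?_)
        (fun n y hy => b2' n y (Ioo_subset_Icc_self hy)) half
        (Summable.of_norm_bounded hvs (fun n => b1' n _ half')) hx
      cases n with
      | zero => simpa [cod, hg2] using hasDerivAt_const y β
      | succ n => exact (cod_deriv hr α β n y).const_mul _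
    refine h1.congr_deriv ?_
    have hsg : Summable (fun n => g2 n x) :=
      Summable.of_norm_bounded hvs2 (fun n => b2' n _ (Ioo_subset_Icc_self hx))
    rw [hsg.tsum_eq_zero_add]
    simp only [hg2, zero_add, psR]
    rw [← tsum_mul_left]
    refine tsum_congr fun n => ?_
    ring
  · unfold psR
    rw [tsum_eq_single 0]
    · simp [co]
    · intro n hn
      obtain ⟨m, rfl⟩ := Nat.exists_eq_succ_of_ne_zero hn
      simp [co]
  · unfold psD
    rw [tsum_eq_single 0]
    · simp [cod]
    · intro n hn
      obtain ⟨m, rfl⟩ := Nat.exists_eq_succ_of_ne_zero hn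
      simp [cod]

lemma psC_zero (r : ℝ → ℝ) (α β x : ℝ) : psC r α β 0 x = ((α + β * (x - 1) : ℝ) : ℂ) := by
  unfold psC
  rw [tsum_eq_single 0]
  · simp [co]
  · intro n hn
    simp [hn]

lemma psC_diff {r : ℝ → ℝ} (hr : Continuous r) (α β : ℝ) {B : ℝ}
    (hM : ∀ t ∈ Icc (0:ℝ) 1, |r t| ≤ B^2) {x : ℝ} (hx : x ∈ Icc (0:ℝ) 1) :
    Differentiable ℂ (fun z => psC r α β z x) := by
  intro z₀
  have hs := (sum_aux2 B (‖z₀‖+1)).mul_left (|α| + |β|)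
  have h1 : DifferentiableOn ℂ (fun z => ∑' n, z^n * (co r α β n x : ℂ)) (Metric.ball 0 (‖z₀‖+1)) := by
    refine Complex.differentiableOn_tsum_of_summable_norm hs (fun n => by fun_prop) Metric.isOpen_ball ?_
    intro n w hw
    have hw' : ‖w‖ ≤ |‖z₀‖+1| := by
      rw [abs_of_nonneg (by positivity)]
      simpa using (mem_ball_zero_iff.1 hw).le
    rw [norm_mul, norm_pow, Complex.norm_real, Real.norm_eq_abs]
    have h2 := co_bound' hr α β hM n hx
    calc ‖w‖^n * |co r α β n x| ≤ |‖z₀‖+1|^n * ((|α| + |β|) * ((B^2)^n / ((2*n).factorial : ℝ))) := by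
          gcongr
      _ = _ := by ring
  exact (h1.differentiableAt (Metric.isOpen_ball.mem_nhds (by simp)))

lemma psC_growth {r : ℝ → ℝ} (hr : Continuous r) (α β : ℝ) {B : ℝ} (hB : 0 ≤ B)
    (hM : ∀ t ∈ Icc (0:ℝ) 1, |r t| ≤ B^2) {x : ℝ} (hx : x ∈ Icc (0:ℝ) 1) (l : ℂ) :
    ‖psC r α β (l^2) x‖ ≤ (|α| + |β|) * Real.exp (B * ‖l‖) := by
  have hs := (sum_aux B ‖l‖)
  have h2 := hs.2 (by positivity)
  have hb : ∀ n, ‖(l^2)^n * (co r α β n x : ℂ)‖ ≤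
      (|α| + |β|) * (‖l‖^(2*n) * ((B^2)^n / ((2*n).factorial : ℝ))) := by
    intro n
    rw [norm_mul, norm_pow, norm_pow, Complex.norm_real, Real.norm_eq_abs]
    have h2 := co_bound' hr α β hM n hx
    calc (‖l‖^2)^n * |co r α β n x| ≤ (‖l‖^2)^n * ((|α| + |β|) * ((B^2)^n / ((2*n).factorial : ℝ))) := by
          gcongr
      _ = _ := by ring
  refine (tsum_of_norm_bounded (hs.1.mul_left _).hasSum hb).trans ?_
  rw [tsum_mul_left]
  gcongr


lemma mono01 {f f' : ℝ → ℝ} (hf : ContinuousOn f (Icc 0 1))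
    (hd : ∀ x ∈ Ioo (0:ℝ) 1, HasDerivAt f (f' x) x) (hn : ∀ x ∈ Ioo (0:ℝ) 1, 0 ≤ f' x) :
    MonotoneOn f (Icc 0 1) := by
  refine monotoneOn_of_deriv_nonneg (convex_Icc 0 1) hf ?_ ?_
  · intro x hx
    rw [interior_Icc] at hx
    exact (hd x hx).differentiableAt.differentiableWithinAt
  · intro x hx
    rw [interior_Icc] at hx
    rw [(hd x hx).deriv]
    exact hn x hx

lemma const01 {f f' : ℝ → ℝ} (hf : ContinuousOn f (Icc 0 1))
    (hd : ∀ x ∈ Ioo (0:ℝ) 1, HasDerivAt f (f' x) x) (hn : ∀ x ∈ Ioo (0:ℝ) 1, f' x = 0) :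
    ∀ x ∈ Icc (0:ℝ) 1, f x = f 1 := by
  intro x hx
  have one : (1:ℝ) ∈ Icc (0:ℝ) 1 := by norm_num
  have h1 := mono01 hf hd (fun x hx => (hn x hx).ge) hx one hx.2
  have h2 := mono01 hf.neg (fun x hx => (hd x hx).neg) (fun x hx => by rw [hn x hx]; simp) hx one hx.2
  simp only [Pi.neg_apply] at h2
  linarith

lemma Sol.wronsk {r : ℝ → ℝ} {z : ℝ} {y y' w w' : ℝ → ℝ} (h : Sol r z y y') (k : Sol r z w w') :
    ∀ x ∈ Icc (0:ℝ) 1, y x * w' x - y' x * w x = y 1 * w' 1 - y' 1 * w 1 := by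
  refine const01 (f := fun x => y x * w' x - y' x * w x) ((h.c0.mul k.c1).sub (h.c1.mul k.c0))
    (fun x hx => ((h.d0 x hx).mul (k.d1 x hx)).sub ((h.d1 x hx).mul (k.d0 x hx))) ?_
  intro x hx
  ring

lemma Sol.comb {r : ℝ → ℝ} {z : ℝ} {y y' w w' : ℝ → ℝ} (h : Sol r z y y') (k : Sol r z w w')
    (μ : ℝ) : Sol r z (fun x => y x + μ * w x) (fun x => y' x + μ * w' x) where
  c0 := h.c0.add (k.c0.const_mul _ )
  c1 := h.c1.add (k.c1.const_mul _)
  d0 x hx := (h.d0 x hx).add ((k.d0 x hx).const_mul μ)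
  d1 x hx := ((h.d1 x hx).add ((k.d1 x hx).const_mul μ)).congr_deriv (by ring)

/-- A speed with quantitative bounds. -/
structure Spd (c c' : ℝ → ℝ) (m M K : ℝ) : Prop where
  cont : Continuous c
  m0 : 0 < m
  lo : ∀ x, m ≤ c x
  hi : ∀ x, c x ≤ M
  d : ∀ x ∈ Ioo (0:ℝ) 1, HasDerivAt c (c' x) x
  dk : ∀ x ∈ Ioo (0:ℝ) 1, |c' x / c x| ≤ K
  K0 : 0 ≤ K

namespace Spd
variable {c c' : ℝ → ℝ} {m M K : ℝ}

lemma pos (h : Spd c c' m M K) (x : ℝ) : 0 < c x := h.m0.trans_le (h.lo x)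

lemma r_cont (h : Spd c c' m M K) : Continuous (fun x => 1 / (c x)^2) :=
  continuous_const.div (h.cont.pow 2) (fun x => by have := h.pos x; positivity)

lemma r_bd (h : Spd c c' m M K) : ∀ t ∈ Icc (0:ℝ) 1, |1 / (c t)^2| ≤ (1/m)^2 := by
  intro t _
  have h0 := h.pos t
  have h1 := h.m0
  have h2 := h.lo t
  rw [abs_of_pos (by positivity), one_div_pow]
  gcongr

lemma icont (h : Spd c c' m M K) : Continuous (fun x => 1 / (c x)) :=
  continuous_const.div h.cont (fun x => (h.pos x).ne')

lemma osc (h : Spd c c' m M K) {τ : ℝ} {y y' : ℝ → ℝ}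
    (hs : Sol (fun x => 1 / (c x)^2) (-τ^2) y y') {x : ℝ} (hx : x ∈ Icc (0:ℝ) 1) :
    τ^2 * (y x)^2 ≤ M^2 * Real.exp (2*K) * ((y' 1)^2 + τ^2 * (y 1)^2 / m^2) := by
  have mon : MonotoneOn (fun x => ((y' x)^2 + τ^2 * ((y x)^2 * (1 / (c x)^2))) * Real.exp (2*K*x))
      (Icc 0 1) := by
    refine mono01 (f' := fun x => (2 * K - 2 * (c' x / c x)) * (τ^2 * ((y x)^2 * (1 / (c x)^2))) * Real.exp (2*K*x)
        + 2 * K * (y' x)^2 * Real.exp (2*K*x)) ?_ ?_ ?_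
    · exact ((hs.c1.pow 2).add (continuousOn_const.mul ((hs.c0.pow 2).mul h.r_cont.continuousOn))).mul
        (by fun_prop)
    · intro x hx
      have hcx := h.pos x
      have e1 : HasDerivAt (fun x => 1 / (c x)^2) (-2 * c' x / (c x)^3) x := by
        have := (((h.d x hx).pow 2).inv (by simpa using hcx.ne'))
        simp only [one_div]
        refine this.congr_deriv ?_
        simp only [Pi.pow_apply, Nat.add_one_sub_one, pow_one, Nat.cast_ofNat]
        field_simp
      have e2 : HasDerivAt (fun x : ℝ => Real.exp (2*K*x)) (Real.exp (2*K*x) * (2*K)) x := by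
        have := ((hasDerivAt_id x).const_mul (2*K)).exp
        simpa using this
      have e3 := ((((hs.d1 x hx).pow 2).add ((((hs.d0 x hx).pow 2).mul e1).const_mul (τ^2))).mul e2)
      refine e3.congr_deriv ?_
      simp only [Pi.add_apply, Pi.pow_apply, Pi.mul_apply]
      field_simp
      ring
    · intro x hx
      have h1 := (abs_le.1 (h.dk x hx)).2
      have h0 := h.K0
      have : 0 ≤ 2 * K - 2 * (c' x / c x) := by linarith
      have hcx := h.pos x
      positivity
  have one : (1:ℝ) ∈ Icc (0:ℝ) 1 := by norm_num
  have h1 := mon hx one hx.2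
  simp only [mul_one] at h1
  have hK := h.K0
  have he : 1 ≤ Real.exp (2*K*x) := Real.one_le_exp (by have := hx.1; positivity)
  have hcx := h.pos x
  have hM : 0 < M := hcx.trans_le (h.hi x)
  have hm := h.m0
  have h2 : τ^2 * ((y x)^2 * (1 / (c x)^2)) ≤ ((y' 1)^2 + τ^2 * ((y 1)^2 * (1 / (c 1)^2))) * Real.exp (2*K) := by
    refine le_trans ?_ h1
    have : 0 ≤ τ^2 * ((y x)^2 * (1 / (c x)^2)) := by positivity
    nlinarith [sq_nonneg (y' x)]
  have h3 : (1 / (c 1)^2) ≤ 1/m^2 := by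
    have := h.lo 1
    gcongr
  have h4 : 1 ≤ M^2 * (1 / (c x)^2) := by
    rw [mul_one_div, one_le_div (by positivity)]
    have := h.hi x
    gcongr
  calc τ^2 * (y x)^2 ≤ τ^2 * (y x)^2 * (M^2 * (1 / (c x)^2)) := le_mul_of_one_le_right (by positivity) h4
    _ = M^2 * (τ^2 * ((y x)^2 * (1 / (c x)^2))) := by ring
    _ ≤ M^2 * (((y' 1)^2 + τ^2 * ((y 1)^2 * (1 / (c 1)^2))) * Real.exp (2*K)) := by gcongr
    _ ≤ M^2 * (((y' 1)^2 + τ^2 * ((y 1)^2 * (1 / m^2))) * Real.exp (2*K)) := by gcongr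
    _ = _ := by ring

lemma yy'_mono (h : Spd c c' m M K) {l : ℝ} {y y' : ℝ → ℝ}
    (hs : Sol (fun x => 1 / (c x)^2) (l^2) y y') : MonotoneOn (fun x => y x * y' x) (Icc 0 1) := by
  refine mono01 (hs.c0.mul hs.c1) (fun x hx => (hs.d0 x hx).mul (hs.d1 x hx)) ?_
  intro x hx
  have hcx := h.pos x
  have : y' x * y' x + y x * (l^2 * (1 / (c x)^2) * y x) = (y' x)^2 + (l / c x * y x)^2 := by
    field_simp
  rw [this]; positivity

/-- monotone exponentially weighted quantity; `σ = 1` for growth to the right, `σ = -1` to the left. -/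
lemma grow (h : Spd c c' m M K) {l σ : ℝ} (hl : 0 < l) (hσ : σ^2 = 1) {y y' : ℝ → ℝ}
    (hs : Sol (fun x => 1 / (c x)^2) (l^2) y y')
    (hsg : ∀ x ∈ Icc (0:ℝ) 1, 0 ≤ σ * (y x * y' x)) {x : ℝ} (hx : x ∈ Icc (0:ℝ) 1) :
    (l * y x)^2 ≤ M^2 * Real.exp (2*K) * (y' 1 + σ * l * y 1 / c 1)^2
      * Real.exp (σ * (2 * l * ∫ s in (1:ℝ)..x, 1 / c s)) := by
  have key : ∀ x ∈ Icc (0:ℝ) 1, (l * y x * (1 / c x))^2 ≤ (y' x + σ * l * y x * (1 / c x))^2 := by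
    intro x hx
    have h1 := hsg x hx
    have hcx := h.pos x
    have : (y' x + σ * l * y x * (1 / c x))^2 = (y' x)^2 + σ^2 * (l * y x * (1 / c x))^2
      + 2 * (l * (1 / c x)) * (σ * (y x * y' x)) := by ring
    rw [this, hσ]
    have : 0 ≤ 2 * (l * (1 / c x)) * (σ * (y x * y' x)) := by positivity
    nlinarith [sq_nonneg (y' x)]
  have mon : MonotoneOn (fun x => (y' x + σ * l * y x * (1 / c x))^2
      * Real.exp (2*K*x - σ * (2 * l * ∫ s in (1:ℝ)..x, 1 / c s))) (Icc 0 1) := by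
    refine mono01 (f' := fun x => 2 * (K * (y' x + σ * l * y x * (1 / c x))^2
        - (c' x / c x) * (σ * (l * y x * (1 / c x)) * (y' x + σ * l * y x * (1 / c x)))) *
        Real.exp (2*K*x - σ * (2 * l * ∫ s in (1:ℝ)..x, 1 / c s))) ?_ ?_ ?_
    · have a1 := (prim_cont h.icont).continuousOn (s := Icc (0:ℝ) 1)
      refine ((hs.c1.add ((continuousOn_const.mul hs.c0).mul h.icont.continuousOn)).pow 2).mul ?_
      exact Real.continuous_exp.comp_continuousOn (((by fun_prop : ContinuousOn (fun x : ℝ => 2*K*x) _)).sub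
        (continuousOn_const.mul (continuousOn_const.mul a1)))
    · intro x hx
      have hcx := h.pos x
      have e1 : HasDerivAt (fun x => 1 / (c x)) (- c' x / (c x)^2) x := by
        have := ((h.d x hx).inv hcx.ne')
        simpa only [one_div] using! this
      have e2 := ((((hasDerivAt_id x).const_mul (2*K))).sub
        (((prim_deriv h.icont x).const_mul (2*l)).const_mul σ)).exp
      have e3 := (((hs.d1 x hx).add (((hs.d0 x hx).const_mul (σ * l)).mul e1)).pow 2).mul e2
      refine e3.congr_deriv ?_
      simp only [Pi.add_apply, Pi.pow_apply, Pi.mul_apply, Pi.sub_apply, id]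
      have hl2 : l^2 = σ^2 * l^2 := by rw [hσ]; ring
      rw [hl2]
      simp only [Nat.add_one_sub_one, pow_one, Nat.cast_ofNat]
      generalize Real.exp (2*K*x - σ * (2 * l * ∫ s in (1:ℝ)..x, 1 / c s)) = E
      have hne := hcx.ne'
      generalize c x = a at *
      field_simp
      ring
    · intro x hx
      have h1 := h.dk x hx
      have h0 := h.K0
      have h2 := key x (Ioo_subset_Icc_self hx)
      set S := y' x + σ * l * y x * (1 / c x)
      set R := l * y x * (1 / c x)
      have h3 : |σ * R * S| ≤ S^2 := by
        rw [abs_mul, abs_mul]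
        have : |σ| = 1 := by rw [← sq_eq_sq₀ (abs_nonneg _) zero_le_one, sq_abs, hσ]; norm_num
        rw [this, one_mul, ← sq_abs S, sq]
        have := sq_le_sq.1 h2
        gcongr
      have h4 : c' x / c x * (σ * R * S) ≤ K * S^2 := by
        refine (le_abs_self _).trans ?_
        rw [abs_mul]
        gcongr
      have : 0 ≤ K * S^2 - c' x / c x * (σ * R * S) := by linarith
      positivity
  have one : (1:ℝ) ∈ Icc (0:ℝ) 1 := by norm_num
  have h1 := mon hx one hx.2
  simp only [intervalIntegral.integral_same, mul_zero, sub_zero, mul_one] at h1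
  have hK := h.K0
  have hcx := h.pos x
  have h4 : (l * y x)^2 ≤ M^2 * (l * y x * (1 / c x))^2 := by
    have : M^2 * (l * y x * (1 / c x))^2 = (l * y x)^2 * (M / c x)^2 := by ring
    rw [this]
    refine le_mul_of_one_le_right (by positivity) (one_le_pow₀ ?_)
    rw [one_le_div hcx]; exact h.hi x
  have h5 : (y' x + σ * l * y x * (1 / c x))^2 ≤ (y' 1 + σ * l * y 1 * (1 / c 1))^2 * Real.exp (2*K) *
      Real.exp (σ * (2 * l * ∫ s in (1:ℝ)..x, 1 / c s)) := by
    have he : Real.exp (2*K*x - σ * (2 * l * ∫ s in (1:ℝ)..x, 1 / c s)) *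
      Real.exp (σ * (2 * l * ∫ s in (1:ℝ)..x, 1 / c s)) = Real.exp (2*K*x) := by
      rw [← Real.exp_add]; ring_nf
    have h6 := mul_le_mul_of_nonneg_right h1 (Real.exp_pos (σ * (2 * l * ∫ s in (1:ℝ)..x, 1 / c s))).le
    rw [mul_assoc, he] at h6
    refine le_trans (le_mul_of_one_le_right (by positivity) (Real.one_le_exp ?_)) h6
    have := hx.1; positivity
  calc (l * y x)^2 ≤ M^2 * (l * y x * (1 / c x))^2 := h4
    _ ≤ M^2 * ((y' 1 + σ * l * y 1 * (1 / c 1))^2 * Real.exp (2*K) *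
      Real.exp (σ * (2 * l * ∫ s in (1:ℝ)..x, 1 / c s))) := by
        have := (key x hx).trans h5
        gcongr
    _ = _ := by ring

/-- solution with Dirichlet data `0` at `0` and `1` at `1`. -/
lemma psi_d (h : Spd c c' m M K) {l : ℝ} {y y' : ℝ → ℝ}
    (hs : Sol (fun x => 1 / (c x)^2) (l^2) y y') (h0 : y 0 = 0) (h1 : y 1 = 1) :
    (∀ x ∈ Icc (0:ℝ) 1, 0 ≤ y x * y' x) ∧ 0 ≤ y' 1 ∧ y' 1 ≤ 1 + l^2 / m^2 := by
  have zero : (0:ℝ) ∈ Icc (0:ℝ) 1 := by norm_num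
  have one : (1:ℝ) ∈ Icc (0:ℝ) 1 := by norm_num
  have a1 : ∀ x ∈ Icc (0:ℝ) 1, 0 ≤ y x * y' x := by
    intro x hx
    have := h.yy'_mono hs zero hx hx.1
    simpa [h0] using this
  refine ⟨a1, by simpa [h1] using a1 1 one, ?_⟩
  have a2 : MonotoneOn (fun x => (y x)^2) (Icc 0 1) := by
    refine mono01 (hs.c0.pow 2) (fun x hx => (hs.d0 x hx).pow 2) ?_
    intro x hx
    have := a1 x (Ioo_subset_Icc_self hx)
    simp only [Nat.cast_ofNat]
    have e : (2:ℝ) * y x ^ (2-1) * y' x = 2 * (y x * y' x) := by norm_num; ring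
    rw [e]; positivity
  have a3 : ∀ x ∈ Icc (0:ℝ) 1, y x ≤ 1 := by
    intro x hx
    have := a2 hx one hx.2
    simp only [h1] at this
    nlinarith
  obtain ⟨ξ, hξ, he⟩ := exists_hasDerivAt_eq_slope y y' (by norm_num : (0:ℝ) < 1) hs.c0 hs.d0
  rw [h0, h1] at he
  have a4 : MonotoneOn (fun x => l^2 / m^2 * x - y' x) (Icc 0 1) := by
    refine mono01 ((by fun_prop : ContinuousOn (fun x : ℝ => l^2 / m^2 * x) _).sub hs.c1)
      (fun x hx => ((hasDerivAt_id x).const_mul (l^2/m^2)).sub (hs.d1 x hx)) ?_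
    intro x hx
    have b1 := a3 x (Ioo_subset_Icc_self hx)
    have hcx := h.pos x
    have hm := h.m0
    have b2 : (1 / (c x)^2) ≤ 1/m^2 := by
      have := h.lo x
      gcongr
    have b3 : 1 / (c x)^2 * y x ≤ 1/m^2 := by
      refine le_trans ?_ b2
      exact mul_le_of_le_one_right (by positivity) b1
    have b4 := mul_le_mul_of_nonneg_left b3 (sq_nonneg l)
    have : l^2 / m^2 = l^2 * (1/m^2) := by ring
    rw [mul_one, this]
    linarith
  have a5 := a4 (Ioo_subset_Icc_self hξ) one hξ.2.le
  simp only at a5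
  have hm := h.m0
  have : 0 ≤ l^2/m^2 * ξ := by have := hξ.1; positivity
  norm_num at he
  linarith

end Spd


lemma PL_zero {G : ℂ → ℂ} (hG : Differentiable ℂ G) (he : ∀ l, G (-l) = G l) {A B C : ℝ}
    (hg : ∀ l, ‖G l‖ ≤ A * Real.exp (B * ‖l‖))
    (h1 : ∀ x : ℝ, 0 ≤ x → ‖G x‖ ≤ C) (h2 : ∀ x : ℝ, 0 ≤ x → ‖G (x * Complex.I)‖ ≤ C)
    (h3 : Filter.Tendsto (fun x : ℝ => G (x * Complex.I)) Filter.atTop (nhds 0)) : G 0 = 0 := by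
  have gro : ∀ s : Filter ℂ, ∃ c < (2 : ℝ), ∃ B,
      G =O[s] fun z => Real.exp (B * ‖z‖ ^ c) := by
    intro s
    refine ⟨1, by norm_num, B, ?_⟩
    refine Asymptotics.IsBigO.of_bound A (Filter.Eventually.of_forall fun z => ?_)
    rw [Real.rpow_one, Real.norm_eq_abs, Real.abs_exp]
    exact hg z
  have bI : ∀ z : ℂ, 0 ≤ z.re → 0 ≤ z.im → ‖G z‖ ≤ C := fun z ha hb =>
    PhragmenLindelof.quadrant_I hG.diffContOnCl (gro _) h1 h2 ha hb
  have bIV : ∀ z : ℂ, 0 ≤ z.re → z.im ≤ 0 → ‖G z‖ ≤ C := by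
    refine fun z ha hb =>
      PhragmenLindelof.quadrant_IV hG.diffContOnCl (gro _) h1 ?_ ha hb
    intro x hx
    have := h2 (-x) (by linarith)
    rw [← he]
    simpa using this
  have bR : ∀ z : ℂ, 0 ≤ z.re → ‖G z‖ ≤ C := fun z ha =>
    (le_total 0 z.im).elim (bI z ha) (bIV z ha)
  have bA : ∀ z : ℂ, ‖G z‖ ≤ C := by
    intro z
    rcases le_total 0 z.re with h | h
    · exact bR z h
    · rw [← he]; exact bR (-z) (by simpa using h)
  have hb : Bornology.IsBounded (range G) := by
    refine (isBounded_iff_forall_norm_le).2 ⟨C, ?_⟩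
    rintro _ ⟨z, rfl⟩
    exact bA z
  have hc := fun z => hG.apply_eq_apply_of_bounded hb z 0
  have : (fun x : ℝ => G (x * Complex.I)) = fun _ => G 0 := funext fun x => hc _
  rw [this] at h3
  exact tendsto_nhds_unique tendsto_const_nhds h3

lemma phi_neg {c c' : ℝ → ℝ} {m M K : ℝ} (h : Spd c c' m M K) {l : ℝ} {y y' : ℝ → ℝ}
    (hs : Sol (fun x => 1 / (c x)^2) (l^2) y y') (h0 : y 1 = 0) (h1 : y' 1 = 1) :
    (∀ x ∈ Icc (0:ℝ) 1, 0 ≤ (-1) * (y x * y' x)) ∧ y 0 ≠ 0 := by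
  have zero : (0:ℝ) ∈ Icc (0:ℝ) 1 := by norm_num
  have one : (1:ℝ) ∈ Icc (0:ℝ) 1 := by norm_num
  have a1 : ∀ x ∈ Icc (0:ℝ) 1, 0 ≤ (-1) * (y x * y' x) := by
    intro x hx
    have := h.yy'_mono hs hx one hx.2
    simp only [h0, zero_mul] at this
    linarith
  refine ⟨a1, fun hz => ?_⟩
  have a2 : MonotoneOn (fun x => -(y x)^2) (Icc 0 1) := by
    refine mono01 (hs.c0.pow 2).neg (fun x hx => ((hs.d0 x hx).pow 2).neg) ?_
    intro x hx
    have := a1 x (Ioo_subset_Icc_self hx)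
    simp only [Nat.cast_ofNat]
    have e : -((2:ℝ) * y x ^ (2-1) * y' x) = 2 * ((-1) * (y x * y' x)) := by norm_num; ring
    rw [e]; positivity
  have a3 : ∀ x ∈ Icc (0:ℝ) 1, y x = 0 := by
    intro x hx
    have := a2 zero hx hx.1
    simp only [hz] at this
    nlinarith
  have a4 : ∀ x ∈ Ioo (0:ℝ) 1, y' x = 0 := by
    intro x hx
    have : HasDerivAt y 0 x := (hasDerivAt_const x (0:ℝ)).congr_of_eventuallyEq <|
      Filter.eventually_of_mem (isOpen_Ioo.mem_nhds hx) fun t ht => a3 t (Ioo_subset_Icc_self ht)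
    exact (hs.d0 x hx).unique this
  have a5 : ∀ x ∈ Icc (0:ℝ) 1, y' x = y' 1 := const01 hs.c1 hs.d1 (fun x hx => by
    rw [a3 x (Ioo_subset_Icc_self hx), mul_zero])
  have := a5 (1/2) (by norm_num)
  rw [a4 (1/2) (by norm_num), h1] at this
  norm_num at this

/-- product estimate for the decaying/growing pair. -/
lemma prod_bd {c₁ c₁' c₂ c₂' : ℝ → ℝ} {m M K : ℝ} (h₁ : Spd c₁ c₁' m M K)
    (h₂ : Spd c₂ c₂' m M K) {l : ℝ} (hl : 1 ≤ l) {y y' w w' : ℝ → ℝ}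
    (hy : Sol (fun x => 1 / (c₁ x)^2) (l^2) y y') (hw : Sol (fun x => 1 / (c₂ x)^2) (l^2) w w')
    (y1 : y 1 = 0) (y1' : y' 1 = 1) (w0 : w 0 = 0) (w1 : w 1 = 1) {x₁ x₂ : ℝ}
    (hx₁ : x₁ ∈ Icc (0:ℝ) 1) (hx₂ : x₂ ∈ Icc (0:ℝ) 1)
    (hY : ∫ s in (1:ℝ)..x₁, 1 / c₁ s = ∫ s in (1:ℝ)..x₂, 1 / c₂ s) :
    |y x₁ * w x₂| ≤ M^2 * Real.exp (2*K) * (1 + 1/m^2 + 1/m) := by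
  have hl0 : 0 < l := by linarith
  have p1 := h₁.grow hl0 (σ := -1) (by norm_num) hy (phi_neg h₁ hy y1 y1').1 hx₁
  obtain ⟨q1, q2, q3⟩ := h₂.psi_d hw w0 w1
  have p2 := h₂.grow hl0 (σ := 1) (by norm_num) hw (by simpa using q1) hx₂
  rw [y1, y1', hY] at p1
  rw [w1] at p2
  set Y := ∫ s in (1:ℝ)..x₂, 1 / c₂ s
  have hm := h₁.m0
  have hM : 0 < M := (h₁.pos 0).trans_le (h₁.hi 0)
  have hc := h₂.pos 1
  have hl2 : 1 ≤ l^2 := one_le_pow₀ hl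
  have n1 : w' 1 + 1 * l * 1 / c₂ 1 ≤ l^2 * (1 + 1/m^2 + 1/m) := by
    have : 1 * l * 1 / c₂ 1 ≤ l^2 * (1/m) := by
      have e : 1 * l * 1 / c₂ 1 = l * (1 / c₂ 1) := by ring
      rw [e]
      have := h₂.lo 1
      gcongr
      nlinarith
    have e : l^2 * (1 + 1/m^2 + 1/m) = l^2 + l^2/m^2 + l^2 * (1/m) := by ring
    rw [e]; linarith
  have n2 : 0 ≤ w' 1 + 1 * l * 1 / c₂ 1 := by positivity
  have e1 : Real.exp (-1 * (2*l*Y)) * Real.exp (1 * (2*l*Y)) = 1 := by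
    rw [← Real.exp_add]; simp
  have q := mul_le_mul p1 p2 (sq_nonneg _) (by positivity)
  have q' : (l^2)^2 * (y x₁ * w x₂)^2 ≤
      (M^2 * Real.exp (2*K))^2 * (w' 1 + 1 * l * 1 / c₂ 1)^2 := by
    calc _ = (l * y x₁)^2 * (l * w x₂)^2 := by ring
      _ ≤ _ := q
      _ = (M^2 * Real.exp (2*K))^2 * (w' 1 + 1 * l * 1 / c₂ 1)^2 *
          (Real.exp (-1 * (2*l*Y)) * Real.exp (1 * (2*l*Y))) := by ring
      _ = _ := by rw [e1, mul_one]
  have q'' : (l^2)^2 * (y x₁ * w x₂)^2 ≤ (l^2)^2 * (M^2 * Real.exp (2*K) * (1 + 1/m^2 + 1/m))^2 := by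
    refine q'.trans ?_
    calc _ ≤ (M^2 * Real.exp (2*K))^2 * (l^2 * (1 + 1/m^2 + 1/m))^2 := by gcongr
      _ = _ := by ring
  have q3 := le_of_mul_le_mul_left q'' (by positivity)
  exact abs_le_of_sq_le_sq q3 (by positivity)

lemma key_pt {c₁ c₁' c₂ c₂' : ℝ → ℝ} {m M K : ℝ} (h₁ : Spd c₁ c₁' m M K)
    (h₂ : Spd c₂ c₂' m M K)
    (hD : ∀ z : ℝ, psR (fun x => 1 / (c₁ x)^2) 1 0 z 0 * psR (fun x => 1 / (c₂ x)^2) 0 1 z 0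
      = psR (fun x => 1 / (c₂ x)^2) 1 0 z 0 * psR (fun x => 1 / (c₁ x)^2) 0 1 z 0) {x₁ x₂ : ℝ}
    (hx₁ : x₁ ∈ Icc (0:ℝ) 1) (hx₂ : x₂ ∈ Icc (0:ℝ) 1)
    (hY : ∫ s in (1:ℝ)..x₁, 1 / c₁ s = ∫ s in (1:ℝ)..x₂, 1 / c₂ s) : x₁ = x₂ := by
  set r₁ : ℝ → ℝ := fun x => 1 / (c₁ x)^2 with hr₁
  set r₂ : ℝ → ℝ := fun x => 1 / (c₂ x)^2 with hr₂
  have hm := h₁.m0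
  have hM : 0 < M := (h₁.pos 0).trans_le (h₁.hi 0)
  set G : ℂ → ℂ := fun l => psC r₁ 0 1 (l^2) x₁ * psC r₂ 1 0 (l^2) x₂
    - psC r₂ 0 1 (l^2) x₂ * psC r₁ 1 0 (l^2) x₁ with hG
  have Gd : Differentiable ℂ G := by
    have sq : Differentiable ℂ (fun l : ℂ => l^2) := by fun_prop
    have a := (psC_diff h₁.r_cont 0 1 h₁.r_bd hx₁).comp sq
    have b := (psC_diff h₂.r_cont 1 0 h₂.r_bd hx₂).comp sq
    have c := (psC_diff h₂.r_cont 0 1 h₂.r_bd hx₂).comp sq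
    have d := (psC_diff h₁.r_cont 1 0 h₁.r_bd hx₁).comp sq
    exact (a.mul b).sub (c.mul d)
  have Gg : ∀ l, ‖G l‖ ≤ 2 * Real.exp (2/m * ‖l‖) := by
    intro l
    have im : 0 ≤ 1/m := by positivity
    have a := psC_growth h₁.r_cont 0 1 im h₁.r_bd hx₁ l
    have b := psC_growth h₂.r_cont 1 0 im h₂.r_bd hx₂ l
    have c := psC_growth h₂.r_cont 0 1 im h₂.r_bd hx₂ l
    have d := psC_growth h₁.r_cont 1 0 im h₁.r_bd hx₁ l
    simp only [abs_zero, abs_one, zero_add, add_zero, one_mul] at a b c d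
    have ee : Real.exp (2/m * ‖l‖) = Real.exp (1/m * ‖l‖) * Real.exp (1/m * ‖l‖) := by
      rw [← Real.exp_add]; ring_nf
    refine (norm_sub_le _ _).trans ?_
    rw [norm_mul, norm_mul, ee, two_mul]
    gcongr
  have Greal : ∀ l z : ℝ, ∀ w : ℂ, w^2 = (z : ℂ) → ‖G w‖ = |psR r₁ 0 1 z x₁ * psR r₂ 1 0 z x₂
    - psR r₂ 0 1 z x₂ * psR r₁ 1 0 z x₁| := by
    intro _ z w hw
    simp only [hG, hw, psC_ofReal]
    rw [← Complex.ofReal_mul, ← Complex.ofReal_mul, ← Complex.ofReal_sub, Complex.norm_real,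
      Real.norm_eq_abs]
  -- bound on the real axis
  have Gre : ∀ l : ℝ, 1 ≤ l → ‖G l‖ ≤ 2 * (M^2 * Real.exp (2*K) * (1 + 1/m^2 + 1/m)) := by
    intro l hl
    rw [Greal l (l^2) l (by push_cast; rfl)]
    obtain ⟨f1, f1a, f1b⟩ := ps_sol h₁.r_cont 0 1 h₁.r_bd (l^2)
    obtain ⟨f2, f2a, f2b⟩ := ps_sol h₂.r_cont 0 1 h₂.r_bd (l^2)
    obtain ⟨t1, t1a, t1b⟩ := ps_sol h₁.r_cont 1 0 h₁.r_bd (l^2)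
    obtain ⟨t2, t2a, t2b⟩ := ps_sol h₂.r_cont 1 0 h₂.r_bd (l^2)
    have n1 := (phi_neg h₁ f1 f1a f1b).2
    have n2 := (phi_neg h₂ f2 f2a f2b).2
    have D := hD (l^2)
    set μ := - psR r₁ 1 0 (l^2) 0 / psR r₁ 0 1 (l^2) 0 with hμ
    have hμ2 : μ = - psR r₂ 1 0 (l^2) 0 / psR r₂ 0 1 (l^2) 0 := by
      rw [hμ, div_eq_div_iff n1 n2]; linarith
    have s1 := t1.comb f1 μ
    have s2 := t2.comb f2 μ
    have z1 : psR r₁ 1 0 (l^2) 0 + μ * psR r₁ 0 1 (l^2) 0 = 0 := by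
      rw [hμ, div_mul_cancel₀ _ n1]; ring
    have z2 : psR r₂ 1 0 (l^2) 0 + μ * psR r₂ 0 1 (l^2) 0 = 0 := by
      rw [hμ2, div_mul_cancel₀ _ n2]; ring
    have b1 := prod_bd h₁ h₂ hl f1 s2 f1a f1b z2 (by rw [t2a, f2a]; ring) hx₁ hx₂ hY
    have b2 := prod_bd h₂ h₁ hl f2 s1 f2a f2b z1 (by rw [t1a, f1a]; ring) hx₂ hx₁ hY.symm
    have e : psR r₁ 0 1 (l^2) x₁ * psR r₂ 1 0 (l^2) x₂ - psR r₂ 0 1 (l^2) x₂ * psR r₁ 1 0 (l^2) x₁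
      = psR r₁ 0 1 (l^2) x₁ * (psR r₂ 1 0 (l^2) x₂ + μ * psR r₂ 0 1 (l^2) x₂)
        - psR r₂ 0 1 (l^2) x₂ * (psR r₁ 1 0 (l^2) x₁ + μ * psR r₁ 0 1 (l^2) x₁) := by ring
    rw [e]
    refine (abs_sub _ _).trans ?_
    linarith
  -- bound on the imaginary axis
  have Gim : ∀ τ : ℝ, 1 ≤ τ → ‖G (τ * Complex.I)‖ ≤ 2 * (M^2 * Real.exp (2*K) / m) / τ := by
    intro τ hτ
    rw [Greal τ (-τ^2) (τ * Complex.I) (by push_cast; rw [mul_pow, Complex.I_sq]; ring)]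
    obtain ⟨f1, f1a, f1b⟩ := ps_sol h₁.r_cont 0 1 h₁.r_bd (-τ^2)
    obtain ⟨f2, f2a, f2b⟩ := ps_sol h₂.r_cont 0 1 h₂.r_bd (-τ^2)
    obtain ⟨t1, t1a, t1b⟩ := ps_sol h₁.r_cont 1 0 h₁.r_bd (-τ^2)
    obtain ⟨t2, t2a, t2b⟩ := ps_sol h₂.r_cont 1 0 h₂.r_bd (-τ^2)
    have o1 := h₁.osc f1 hx₁
    have o2 := h₂.osc f2 hx₂
    have o3 := h₁.osc t1 hx₁
    have o4 := h₂.osc t2 hx₂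
    rw [f1a, f1b] at o1
    rw [f2a, f2b] at o2
    rw [t1a, t1b] at o3
    rw [t2a, t2b] at o4
    have hτ0 : 0 < τ := by linarith
    have gen : ∀ a b : ℝ, τ^2 * a^2 ≤ M^2 * Real.exp (2*K) * (1^2 + τ^2 * 0^2 / m^2) →
        τ^2 * b^2 ≤ M^2 * Real.exp (2*K) * (0^2 + τ^2 * 1^2 / m^2) →
        |a * b| ≤ M^2 * Real.exp (2*K) / m / τ := by
      intro a b ha hb
      have q := mul_le_mul ha hb (by positivity) (by positivity)
      have q' : (τ^2)^2 * (a*b)^2 ≤ (τ^2)^2 * (M^2 * Real.exp (2*K) / m / τ)^2 := by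
        calc _ = τ^2 * a^2 * (τ^2 * b^2) := by ring
          _ ≤ _ := q
          _ = _ := by field_simp; ring
      exact abs_le_of_sq_le_sq (le_of_mul_le_mul_left q' (by positivity)) (by positivity)
    have g1 := gen _ _ o1 o4
    have g2 := gen _ _ o2 o3
    refine (abs_sub _ _).trans ?_
    have : 2 * (M^2 * Real.exp (2*K) / m) / τ = M^2 * Real.exp (2*K) / m / τ + M^2 * Real.exp (2*K) / m / τ := by
      ring
    rw [this]
    exact add_le_add g1 g2
  have G0 : G 0 = 0 := by
    set C := max (2 * Real.exp (2/m)) (max (2 * (M^2 * Real.exp (2*K) * (1 + 1/m^2 + 1/m)))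
      (2 * (M^2 * Real.exp (2*K) / m)))
    have sm : ∀ l : ℂ, ‖l‖ ≤ 1 → ‖G l‖ ≤ C := by
      intro l hl
      refine (Gg l).trans (le_trans ?_ (le_max_left _ _))
      gcongr
      exact mul_le_of_le_one_right (by positivity) hl
    refine PL_zero (C := C) Gd (fun l => by simp [hG]) Gg ?_ ?_ ?_
    · intro x hx
      rcases le_total x 1 with h | h
      · exact sm _ (by simpa [abs_of_nonneg hx] using h)
      · exact (Gre x h).trans ((le_max_left _ _).trans (le_max_right _ _))
    · intro x hx
      rcases le_total x 1 with h | h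
      · exact sm _ (by simpa [abs_of_nonneg hx] using h)
      · refine (Gim x h).trans (le_trans ?_ ((le_max_right _ _).trans (le_max_right _ _)))
        exact div_le_self (by positivity) h
    · refine squeeze_zero_norm' (a := fun τ : ℝ => 2 * (M^2 * Real.exp (2*K) / m) / τ) ?_ ?_
      · filter_upwards [Filter.eventually_ge_atTop 1] with τ hτ using Gim τ hτ
      · exact tendsto_const_nhds.div_atTop Filter.tendsto_id
  simp only [hG] at G0
  rw [zero_pow (by norm_num), psC_zero, psC_zero, psC_zero, psC_zero, ← Complex.ofReal_mul,
    ← Complex.ofReal_mul, ← Complex.ofReal_sub, Complex.ofReal_eq_zero] at G0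
  linarith

/-- the travel time comparison gives equality of speeds on `(0,1)`. -/
lemma key_le {c₁ c₁' c₂ c₂' : ℝ → ℝ} {m M K : ℝ} (h₁ : Spd c₁ c₁' m M K)
    (h₂ : Spd c₂ c₂' m M K)
    (hp : ∀ x₁ ∈ Icc (0:ℝ) 1, ∀ x₂ ∈ Icc (0:ℝ) 1,
      ∫ s in (1:ℝ)..x₁, 1 / c₁ s = ∫ s in (1:ℝ)..x₂, 1 / c₂ s → x₁ = x₂)
    (hle : ∫ s in (1:ℝ)..0, 1 / c₂ s ≤ ∫ s in (1:ℝ)..0, 1 / c₁ s) :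
    ∀ x ∈ Ioo (0:ℝ) 1, c₁ x = c₂ x := by
  have eqY : ∀ x ∈ Icc (0:ℝ) 1, ∫ s in (1:ℝ)..x, 1 / c₁ s = ∫ s in (1:ℝ)..x, 1 / c₂ s := by
    intro x hx
    have m1 : MonotoneOn (fun x => ∫ s in (1:ℝ)..x, 1 / c₁ s) (Icc 0 1) :=
      mono01 (prim_cont h₁.icont).continuousOn (fun x _ => prim_deriv h₁.icont x)
        (fun x _ => by have := h₁.pos x; positivity)
    have a := m1 (by norm_num) hx hx.1
    have b := m1 hx (by norm_num) hx.2
    simp only [intervalIntegral.integral_same] at a b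
    have iv := intermediate_value_Icc (zero_le_one (α := ℝ)) (prim_cont h₂.icont).continuousOn
    obtain ⟨x₂, hx₂, he⟩ := iv (show (∫ s in (1:ℝ)..x, 1 / c₁ s) ∈ Icc _ _ from
      ⟨hle.trans a, by simpa using b⟩)
    have := hp x hx x₂ hx₂ he.symm
    rw [← this] at he
    exact he.symm
  intro x hx
  have d1 := prim_deriv h₁.icont x
  have d2 : HasDerivAt (fun x => ∫ s in (1:ℝ)..x, 1 / c₁ s) (1 / c₂ x) x :=
    (prim_deriv h₂.icont x).congr_of_eventuallyEq <|
      Filter.eventually_of_mem (isOpen_Ioo.mem_nhds hx) fun t ht => eqY t (Ioo_subset_Icc_self ht)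
  have := d1.unique d2
  simpa using this

lemma key_speed {c₁ c₁' c₂ c₂' : ℝ → ℝ} {m M K : ℝ} (h₁ : Spd c₁ c₁' m M K)
    (h₂ : Spd c₂ c₂' m M K)
    (hD : ∀ z : ℝ, psR (fun x => 1 / (c₁ x)^2) 1 0 z 0 * psR (fun x => 1 / (c₂ x)^2) 0 1 z 0
      = psR (fun x => 1 / (c₂ x)^2) 1 0 z 0 * psR (fun x => 1 / (c₁ x)^2) 0 1 z 0) :
    ∀ x ∈ Ioo (0:ℝ) 1, c₁ x = c₂ x := by
  rcases le_total (∫ s in (1:ℝ)..0, 1 / c₂ s) (∫ s in (1:ℝ)..0, 1 / c₁ s) with h | h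
  · exact key_le h₁ h₂ (fun x₁ a x₂ b e => key_pt h₁ h₂ hD a b e) h
  · intro x hx
    exact (key_le h₂ h₁ (fun x₁ a x₂ b e => (key_pt h₁ h₂ hD b a e.symm).symm) h x hx).symm

/-- extension of the determinant relation from an interval of the negative axis. -/
lemma det_ext {c₁ c₁' c₂ c₂' : ℝ → ℝ} {m M K : ℝ} (h₁ : Spd c₁ c₁' m M K)
    (h₂ : Spd c₂ c₂' m M K) {τ₀ : ℝ}
    (hD : ∀ᶠ τ in nhds τ₀, psR (fun x => 1 / (c₁ x)^2) 1 0 (-τ^2) 0 * psR (fun x => 1 / (c₂ x)^2) 0 1 (-τ^2) 0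
      = psR (fun x => 1 / (c₂ x)^2) 1 0 (-τ^2) 0 * psR (fun x => 1 / (c₁ x)^2) 0 1 (-τ^2) 0) (z : ℝ) :
    psR (fun x => 1 / (c₁ x)^2) 1 0 z 0 * psR (fun x => 1 / (c₂ x)^2) 0 1 z 0
      = psR (fun x => 1 / (c₂ x)^2) 1 0 z 0 * psR (fun x => 1 / (c₁ x)^2) 0 1 z 0 := by
  set r₁ : ℝ → ℝ := fun x => 1 / (c₁ x)^2 with hr₁
  set r₂ : ℝ → ℝ := fun x => 1 / (c₂ x)^2 with hr₂
  have zero : (0:ℝ) ∈ Icc (0:ℝ) 1 := by norm_num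
  set G : ℂ → ℂ := fun l => psC r₁ 1 0 (-l^2) 0 * psC r₂ 0 1 (-l^2) 0
    - psC r₂ 1 0 (-l^2) 0 * psC r₁ 0 1 (-l^2) 0 with hG
  have Gd : Differentiable ℂ G := by
    have sq : Differentiable ℂ (fun l : ℂ => -l^2) := by fun_prop
    have a := (psC_diff h₁.r_cont 1 0 h₁.r_bd zero).comp sq
    have b := (psC_diff h₂.r_cont 0 1 h₂.r_bd zero).comp sq
    have c := (psC_diff h₂.r_cont 1 0 h₂.r_bd zero).comp sq
    have d := (psC_diff h₁.r_cont 0 1 h₁.r_bd zero).comp sq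
    exact (a.mul b).sub (c.mul d)
  have Gan : AnalyticOnNhd ℂ G univ := fun w _ => Gd.analyticAt w
  have Gz : ∃ᶠ w in nhdsWithin (τ₀ : ℂ) {(τ₀ : ℂ)}ᶜ, G w = 0 := by
    have t : Filter.Tendsto (fun τ : ℝ => (τ : ℂ)) (nhdsWithin τ₀ {τ₀}ᶜ) (nhdsWithin (τ₀ : ℂ) {(τ₀ : ℂ)}ᶜ) := by
      refine tendsto_nhdsWithin_iff.2 ⟨?_, ?_⟩
      · exact (Complex.continuous_ofReal.tendsto τ₀).mono_left nhdsWithin_le_nhds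
      · filter_upwards [self_mem_nhdsWithin] with τ hτ
        simpa using hτ
    have ev : ∀ᶠ τ : ℝ in nhdsWithin τ₀ {τ₀}ᶜ, G (τ : ℂ) = 0 := by
      filter_upwards [nhdsWithin_le_nhds hD] with τ hτ
      simp only [hG]
      have : -(τ:ℂ)^2 = ((-τ^2 : ℝ) : ℂ) := by push_cast; rfl
      rw [this]
      simp only [psC_ofReal]
      rw [sub_eq_zero]
      exact_mod_cast hτ
    exact t.frequently ev.frequently
  have G0 := Gan.eqOn_zero_of_preconnected_of_frequently_eq_zero isPreconnected_univ (mem_univ _) Gz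
  obtain ⟨w, hw⟩ : ∃ w : ℂ, w^2 = -(z:ℂ) := IsAlgClosed.exists_pow_nat_eq _ (by norm_num)
  have := G0 (mem_univ w)
  simp only [hG, hw, neg_neg, psC_ofReal, Pi.zero_apply] at this
  rw [sub_eq_zero] at this
  exact_mod_cast this


/-- Regularity data extracted from a classical solution. -/
structure WData (c0 : ℝ) (c : ℝ → ℝ) (f : ℝ → ℝ) (u ut ux utt uxx : ℝ → ℝ → ℝ) (C κ : ℝ) : Prop where
  cu : ContinuousOn (Function.uncurry u) (Ici 0 ×ˢ Ici 0)
  cut : ContinuousOn (Function.uncurry ut) (Ici 0 ×ˢ Ici 0)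
  cux : ContinuousOn (Function.uncurry ux) (Ici 0 ×ˢ Ici 0)
  cutt : ContinuousOn (Function.uncurry utt) (Ici 0 ×ˢ Ici 0)
  cuxx : ContinuousOn (Function.uncurry uxx) (Ici 0 ×ˢ Ici 0)
  dt : ∀ t ≥ 0, ∀ x ≥ 0, HasDerivWithinAt (fun s => u s x) (ut t x) (Ici 0) t
  dx : ∀ t ≥ 0, ∀ x ≥ 0, HasDerivWithinAt (fun y => u t y) (ux t x) (Ici 0) x
  dtt : ∀ t ≥ 0, ∀ x ≥ 0, HasDerivWithinAt (fun s => ut s x) (utt t x) (Ici 0) t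
  dxx : ∀ t ≥ 0, ∀ x ≥ 0, HasDerivWithinAt (fun y => ux t y) (uxx t x) (Ici 0) x
  pde : ∀ t > 0, ∀ x > 0, utt t x = (c x)^2 * uxx t x
  init : ∀ x ≥ 0, u 0 x = f x
  init' : ∀ x ≥ 0, ut 0 x = 0
  bdry : ∀ t ≥ 0, u t 0 = 0
  out : ∀ t ≥ 0, ut t 1 + c0 * ux t 1 = 0
  C0 : 0 < C
  κ0 : 0 < κ
  bu : ∀ t ≥ 0, ∀ x ∈ Icc (0:ℝ) 1, |u t x| ≤ C * Real.exp (-κ * t)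
  bux : ∀ t ≥ 0, ∀ x ∈ Icc (0:ℝ) 1, |ux t x| ≤ C * Real.exp (-κ * t)

lemma slice_t {g : ℝ × ℝ → ℝ} (hg : DifferentiableOn ℝ g (Ici 0 ×ˢ Ici 0)) {t x : ℝ}
    (ht : 0 ≤ t) (hx : 0 ≤ x) :
    HasDerivWithinAt (fun s => g (s, x)) (fderivWithin ℝ g (Ici 0 ×ˢ Ici 0) (t, x) (1, 0)) (Ici 0) t := by
  have h1 := (hg (t, x) ⟨ht, hx⟩).hasFDerivWithinAt
  have h2 : HasDerivWithinAt (fun s : ℝ => (s, x)) ((1:ℝ), (0:ℝ)) (Ici 0) t :=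
    ((hasDerivAt_id t).prodMk (hasDerivAt_const t x)).hasDerivWithinAt
  have h3 : MapsTo (fun s : ℝ => (s, x)) (Ici 0) (Ici 0 ×ˢ Ici 0) := fun s hs => ⟨hs, hx⟩
  exact h1.comp_hasDerivWithinAt t h2 h3

lemma slice_x {g : ℝ × ℝ → ℝ} (hg : DifferentiableOn ℝ g (Ici 0 ×ˢ Ici 0)) {t x : ℝ}
    (ht : 0 ≤ t) (hx : 0 ≤ x) :
    HasDerivWithinAt (fun s => g (t, s)) (fderivWithin ℝ g (Ici 0 ×ˢ Ici 0) (t, x) (0, 1)) (Ici 0) x := by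
  have h1 := (hg (t, x) ⟨ht, hx⟩).hasFDerivWithinAt
  have h2 : HasDerivWithinAt (fun s : ℝ => (t, s)) ((0:ℝ), (1:ℝ)) (Ici 0) x :=
    ((hasDerivAt_const x t).prodMk (hasDerivAt_id x)).hasDerivWithinAt
  have h3 : MapsTo (fun s : ℝ => (t, s)) (Ici 0) (Ici 0 ×ˢ Ici 0) := fun s hs => ⟨ht, hs⟩
  exact h1.comp_hasDerivWithinAt x h2 h3

lemma wdata {c0 : ℝ} (hc0 : 0 < c0) {c f : ℝ → ℝ} {u : ℝ → ℝ → ℝ} (hc : IsWaveSpeed c0 c)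
    (hs : ∀ x ∈ Ici (0:ℝ), x ∉ Ioo (0:ℝ) 1 → f x = 0)
    (hu : IsWaveSolution c f u) (hd : DecaysExp u) :
    ∃ ut ux utt uxx : ℝ → ℝ → ℝ, ∃ C κ : ℝ, WData c0 c f u ut ux utt uxx C κ := by
  obtain ⟨hC2, hpde, hinit, hinit', hbd⟩ := hu
  obtain ⟨C, hC, κ, hκ, hdec⟩ := hd
  set Q : Set (ℝ × ℝ) := Ici 0 ×ˢ Ici 0 with hQ
  set U := Function.uncurry u with hU
  have uQ : UniqueDiffOn ℝ Q := (uniqueDiffOn_Ici 0).prod (uniqueDiffOn_Ici 0)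
  have dU : DifferentiableOn ℝ U Q := hC2.differentiableOn (by norm_num)
  have hF : ContDiffOn ℝ 1 (fderivWithin ℝ U Q) Q := hC2.fderivWithin uQ (by norm_num)
  have hUt : ContDiffOn ℝ 1 (fun p => fderivWithin ℝ U Q p (1, 0)) Q := hF.clm_apply contDiffOn_const
  have hUx : ContDiffOn ℝ 1 (fun p => fderivWithin ℝ U Q p (0, 1)) Q := hF.clm_apply contDiffOn_const
  set Ut : ℝ × ℝ → ℝ := (fun p => fderivWithin ℝ U Q p (1, 0)) with hUt'
  set Ux : ℝ × ℝ → ℝ := (fun p => fderivWithin ℝ U Q p (0, 1)) with hUx'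
  have dUt : DifferentiableOn ℝ Ut Q := hUt.differentiableOn (by norm_num)
  have dUx : DifferentiableOn ℝ Ux Q := hUx.differentiableOn (by norm_num)
  have hUtt : ContinuousOn (fun p => fderivWithin ℝ Ut Q p (1, 0)) Q :=
    (hUt.continuousOn_fderivWithin uQ (by norm_num)).clm_apply continuousOn_const
  have hUxx : ContinuousOn (fun p => fderivWithin ℝ Ux Q p (0, 1)) Q :=
    (hUx.continuousOn_fderivWithin uQ (by norm_num)).clm_apply continuousOn_const
  have sdt : ∀ t ≥ 0, ∀ x ≥ 0, HasDerivWithinAt (fun s => u s x) (Ut (t, x)) (Ici 0) t :=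
    fun t ht x hx => slice_t dU ht hx
  have sdx : ∀ t ≥ 0, ∀ x ≥ 0, HasDerivWithinAt (fun y => u t y) (Ux (t, x)) (Ici 0) x :=
    fun t ht x hx => slice_x dU ht hx
  have sdtt : ∀ t ≥ 0, ∀ x ≥ 0, HasDerivWithinAt (fun s => Ut (s, x)) (fderivWithin ℝ Ut Q (t, x) (1, 0)) (Ici 0) t :=
    fun t ht x hx => slice_t dUt ht hx
  have sdxx : ∀ t ≥ 0, ∀ x ≥ 0, HasDerivWithinAt (fun y => Ux (t, y)) (fderivWithin ℝ Ux Q (t, x) (0, 1)) (Ici 0) x :=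
    fun t ht x hx => slice_x dUx ht hx
  have ud : ∀ t ≥ (0:ℝ), UniqueDiffWithinAt ℝ (Ici (0:ℝ)) t := fun t ht => uniqueDiffOn_Ici 0 t ht
  have pde : ∀ t > 0, ∀ x > 0, fderivWithin ℝ Ut Q (t, x) (1, 0)
      = (c x)^2 * fderivWithin ℝ Ux Q (t, x) (0, 1) := by
    intro t ht x hx
    have h := hpde t ht x hx
    have e1 : deriv (fun s => deriv (fun r => u r x) s) t = fderivWithin ℝ Ut Q (t, x) (1, 0) := by
      have : (fun s => deriv (fun r => u r x) s) =ᶠ[nhds t] fun s => Ut (s, x) := by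
        filter_upwards [Ioi_mem_nhds ht] with s hs
        exact ((sdt s (le_of_lt hs) x hx.le).hasDerivAt (Ici_mem_nhds hs)).deriv
      rw [this.deriv_eq]
      exact ((sdtt t ht.le x hx.le).hasDerivAt (Ici_mem_nhds ht)).deriv
    have e2 : deriv (fun y => deriv (fun w => u t w) y) x = fderivWithin ℝ Ux Q (t, x) (0, 1) := by
      have : (fun y => deriv (fun w => u t w) y) =ᶠ[nhds x] fun s => Ux (t, s) := by
        filter_upwards [Ioi_mem_nhds hx] with s hs
        exact ((sdx t ht.le s (le_of_lt hs)).hasDerivAt (Ici_mem_nhds hs)).deriv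
      rw [this.deriv_eq]
      exact ((sdxx t ht.le x hx.le).hasDerivAt (Ici_mem_nhds hx)).deriv
    rw [e1, e2] at h
    exact h
  have hinit2 : ∀ x ≥ 0, Ut (0, x) = 0 := by
    intro x hx
    rw [← (sdt 0 le_rfl x hx).derivWithin (ud 0 le_rfl)]
    exact hinit' x hx
  have hux0 : ∀ x ≥ 1, Ux (0, x) = 0 := by
    intro x hx
    have hx0 : 0 ≤ x := zero_le_one.trans hx
    have h1 : HasDerivWithinAt (fun y => u 0 y) (Ux (0, x)) (Ici 1) x :=
      (sdx 0 le_rfl x hx0).mono (Ici_subset_Ici.2 zero_le_one)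
    have h2 : HasDerivWithinAt (fun y => u 0 y) 0 (Ici 1) x := by
      have z : ∀ y ∈ Ici (1:ℝ), u 0 y = 0 := by
        intro y hy
        have hy0 : y ∈ Ici (0:ℝ) := mem_Ici.2 (zero_le_one.trans (mem_Ici.1 hy))
        rw [hinit y hy0]
        exact hs y hy0 (fun h => absurd h.2 (not_lt.2 hy))
      exact (hasDerivWithinAt_const x (Ici (1:ℝ)) (0:ℝ)).congr z (z x hx)
    exact (uniqueDiffOn_Ici 1 x hx).eq_deriv _ h1 h2
  have out : ∀ T ≥ 0, Ut (T, 1) + c0 * Ux (T, 1) = 0 := by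
    intro T hT
    rcases hT.eq_or_lt with rfl | hT'
    · rw [hinit2 1 zero_le_one, hux0 1 le_rfl]; ring
    set γ : ℝ → ℝ × ℝ := fun s => (s, 1 + c0 * (T - s)) with hγ
    have γc : Continuous γ := by fun_prop
    have γQ : MapsTo γ (Icc 0 T) Q := by
      intro s hs
      refine ⟨hs.1, ?_⟩
      show 0 ≤ 1 + c0 * (T - s)
      have : 0 ≤ T - s := by linarith [hs.2]
      positivity
    have Hc : ContinuousOn (fun s => Ut (γ s) + c0 * Ux (γ s)) (Icc 0 T) :=
      (hUt.continuousOn.comp γc.continuousOn γQ).add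
        (continuousOn_const.mul (hUx.continuousOn.comp γc.continuousOn γQ))
    have Hd : ∀ s ∈ Ioo 0 T, HasDerivAt (fun s => Ut (γ s) + c0 * Ux (γ s)) 0 s := by
      intro s hs
      have xs : 0 < 1 + c0 * (T - s) := by
        have : 0 < T - s := by linarith [hs.2]
        positivity
      have x1 : 1 < 1 + c0 * (T - s) := by
        have : 0 < T - s := by linarith [hs.2]
        have : 0 < c0 * (T - s) := by positivity
        linarith
      have hn : Q ∈ nhds (γ s) := prod_mem_nhds (Ici_mem_nhds hs.1) (Ici_mem_nhds xs)
      have hn' : ∀ᶠ p in nhds (γ s), Q ∈ nhds p := eventually_mem_nhds_iff.2 hn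
      have hf : ∀ᶠ p in nhds (γ s), HasFDerivAt U (fderivWithin ℝ U Q p) p := by
        filter_upwards [hn'] with p hp
        exact (dU p (mem_of_mem_nhds hp)).hasFDerivWithinAt.hasFDerivAt hp
      have hFd : DifferentiableAt ℝ (fderivWithin ℝ U Q) (γ s) :=
        (hF.differentiableOn (by norm_num)).differentiableAt hn
      set f2 := fderiv ℝ (fderivWithin ℝ U Q) (γ s)
      have hF2 : HasFDerivAt (fderivWithin ℝ U Q) f2 (γ s) := hFd.hasFDerivAt
      have sym := second_derivative_symmetric_of_eventually hf hF2 (1, 0) (0, 1)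
      have γd : HasDerivAt γ (1, -c0) s := by
        refine (hasDerivAt_id s).prodMk ?_
        have := (((hasDerivAt_id s).const_sub T).const_mul c0).const_add 1
        simpa using this
      have dd := hF2.comp_hasDerivAt s γd
      have d1 : HasDerivAt (fun s => Ut (γ s)) (f2 (1, -c0) (1, 0)) s := by
        have := dd.clm_apply (hasDerivAt_const s ((1:ℝ), (0:ℝ)))
        simpa using! this
      have d2 : HasDerivAt (fun s => Ux (γ s)) (f2 (1, -c0) (0, 1)) s := by
        have := dd.clm_apply (hasDerivAt_const s ((0:ℝ), (1:ℝ)))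
        simpa using! this
      have ett : fderivWithin ℝ Ut Q (γ s) (1, 0) = f2 (1, 0) (1, 0) := by
        have : HasFDerivAt Ut (f2.flip (1, 0)) (γ s) := by
          have := hF2.clm_apply (hasFDerivAt_const ((1:ℝ), (0:ℝ)) (γ s))
          simpa using! this
        rw [(this.hasFDerivWithinAt).fderivWithin (uQ _ (mem_of_mem_nhds hn))]
        rfl
      have exx : fderivWithin ℝ Ux Q (γ s) (0, 1) = f2 (0, 1) (0, 1) := by
        have : HasFDerivAt Ux (f2.flip (0, 1)) (γ s) := by
          have := hF2.clm_apply (hasFDerivAt_const ((0:ℝ), (1:ℝ)) (γ s))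
          simpa using! this
        rw [(this.hasFDerivWithinAt).fderivWithin (uQ _ (mem_of_mem_nhds hn))]
        rfl
      have p := pde s hs.1 (1 + c0 * (T - s)) xs
      have cc : c (1 + c0 * (T - s)) = c0 := hc.2.2 _ xs.le (fun h => absurd h.2 (not_lt.2 x1.le))
      rw [cc] at p
      have p' : f2 (1, 0) (1, 0) = c0^2 * f2 (0, 1) (0, 1) := by
        rw [← ett, ← exx]; exact p
      refine (d1.add (d2.const_mul c0)).congr_deriv ?_
      have dec : ((1:ℝ), -c0) = (1, 0) - c0 • ((0:ℝ), (1:ℝ)) := by simp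
      rw [dec]
      simp only [map_sub, map_smul, sub_apply, smul_apply,
        smul_eq_mul]
      rw [p', sym]; ring
    have cst : (fun s => Ut (γ s) + c0 * Ux (γ s)) T = (fun s => Ut (γ s) + c0 * Ux (γ s)) 0 := by
      obtain ⟨ξ, hξ, he⟩ := exists_hasDerivAt_eq_slope _ _ hT' Hc Hd
      have : T - 0 ≠ 0 := by linarith
      have h2 := (eq_div_iff this).1 he
      linarith
    simp only [hγ, sub_self, mul_zero, add_zero, sub_zero] at cst
    rw [cst, hinit2 _ (by positivity), hux0 _ (by
      have : 0 ≤ c0 * T := by positivity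
      linarith)]
    ring
  refine ⟨fun t x => Ut (t, x), fun t x => Ux (t, x), fun t x => fderivWithin ℝ Ut Q (t, x) (1, 0),
    fun t x => fderivWithin ℝ Ux Q (t, x) (0, 1), C, κ, ?_⟩
  exact
  { cu := hC2.continuousOn
    cut := hUt.continuousOn
    cux := hUx.continuousOn
    cutt := hUtt
    cuxx := hUxx
    dt := sdt
    dx := sdx
    dtt := sdtt
    dxx := sdxx
    pde := pde
    init := fun x hx => hinit x hx
    init' := hinit2
    bdry := fun t ht => hbd t ht
    out := out
    C0 := hC
    κ0 := hκ
    bu := fun t ht x hx => by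
      have := hdec t ht x hx
      linarith [abs_nonneg (derivWithin (fun y => u t y) (Ici 0) x)]
    bux := fun t ht x hx => by
      have := hdec t ht x hx
      rw [(sdx t ht x hx.1).derivWithin (ud x hx.1)] at this
      linarith [abs_nonneg (u t x)] }


lemma slice_ct {g : ℝ → ℝ → ℝ} (hg : ContinuousOn (Function.uncurry g) (Ici 0 ×ˢ Ici 0)) {x : ℝ}
    (hx : 0 ≤ x) : ContinuousOn (fun t => g t x) (Ici 0) := by
  have h2 : Continuous (fun s : ℝ => (s, x)) := by fun_prop
  have h3 : MapsTo (fun s : ℝ => (s, x)) (Ici 0) (Ici 0 ×ˢ Ici 0) := fun s hs => ⟨hs, hx⟩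
  exact hg.comp h2.continuousOn h3

lemma slice_cx {g : ℝ → ℝ → ℝ} (hg : ContinuousOn (Function.uncurry g) (Ici 0 ×ˢ Ici 0)) {t : ℝ}
    (ht : 0 ≤ t) : ContinuousOn (fun x => g t x) (Ici 0) := by
  have h2 : Continuous (fun s : ℝ => (t, s)) := by fun_prop
  have h3 : MapsTo (fun s : ℝ => (t, s)) (Ici 0) (Ici 0 ×ˢ Ici 0) := fun s hs => ⟨ht, hs⟩
  exact hg.comp h2.continuousOn h3

lemma cos_cont {g : ℝ → ℝ} (hg : ContinuousOn g (Ici 0)) (τ : ℝ) :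
    ContinuousOn (fun t => Real.cos (τ * t) * g t) (Ici 0) := by
  have : Continuous (fun t => Real.cos (τ * t)) := by fun_prop
  exact this.continuousOn.mul hg

lemma cos_meas {g : ℝ → ℝ} (hg : ContinuousOn g (Ici 0)) (τ : ℝ) :
    MeasureTheory.AEStronglyMeasurable (fun t => Real.cos (τ * t) * g t)
      (MeasureTheory.volume.restrict (Ioi 0)) :=
  ((cos_cont hg τ).mono Ioi_subset_Ici_self).aestronglyMeasurable measurableSet_Ioi

lemma cos_bd (τ t a b : ℝ) (h : |a| ≤ b) : ‖Real.cos (τ * t) * a‖ ≤ b := by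
  rw [Real.norm_eq_abs, abs_mul]
  calc |Real.cos (τ * t)| * |a| ≤ 1 * |a| :=
        mul_le_mul_of_nonneg_right (Real.abs_cos_le_one _) (abs_nonneg _)
    _ ≤ b := by linarith

lemma exp_int {C κ : ℝ} (hκ : 0 < κ) (a : ℝ) :
    MeasureTheory.IntegrableOn (fun t => C * Real.exp (-κ * t)) (Ioi a) :=
  (exp_neg_integrableOn_Ioi a hκ).const_mul C

lemma cos_int {g : ℝ → ℝ} (hg : ContinuousOn g (Ici 0)) {C κ : ℝ} (hκ : 0 < κ)
    (hb : ∀ t ≥ 0, |g t| ≤ C * Real.exp (-κ * t)) (τ : ℝ) :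
    MeasureTheory.IntegrableOn (fun t => Real.cos (τ * t) * g t) (Ioi 0) := by
  refine MeasureTheory.Integrable.mono' (exp_int (C := C) hκ 0) (cos_meas hg τ) ?_
  refine (MeasureTheory.ae_restrict_iff' measurableSet_Ioi).2 (Filter.Eventually.of_forall ?_)
  intro t ht
  exact cos_bd _ _ _ _ (hb t (le_of_lt ht))

lemma cos_tail {g : ℝ → ℝ} (hg : ContinuousOn g (Ici 0)) {C κ : ℝ} (hκ : 0 < κ)
    (hb : ∀ t ≥ 0, |g t| ≤ C * Real.exp (-κ * t)) (τ : ℝ) {T : ℝ} (hT : 0 ≤ T) :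
    |(∫ t in (0:ℝ)..T, Real.cos (τ * t) * g t) - ∫ t in Ioi 0, Real.cos (τ * t) * g t|
      ≤ C * (Real.exp (-κ * T) / κ) := by
  have h1 := intervalIntegral.integral_Ioi_sub_Ioi (cos_int hg hκ hb τ) hT
  rw [← h1]
  have : ∀ a b : ℝ, a - b - a = -b := by intros; ring
  rw [this, abs_neg]
  have h2 : ∫ t in Ioi T, C * Real.exp (-κ * t) = C * (Real.exp (-κ * T) / κ) := by
    rw [MeasureTheory.integral_const_mul, integral_exp_mul_Ioi (by linarith)]
    rw [neg_div_neg_eq]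
  rw [← h2]
  rw [← Real.norm_eq_abs]
  refine MeasureTheory.norm_integral_le_of_norm_le (exp_int hκ T) ?_
  refine (MeasureTheory.ae_restrict_iff' measurableSet_Ioi).2 (Filter.Eventually.of_forall ?_)
  intro t ht
  exact cos_bd _ _ _ _ (hb t (hT.trans (le_of_lt ht)))

lemma cos_transform_cont {g : ℝ → ℝ} (hg : ContinuousOn g (Ici 0)) {C κ : ℝ} (hκ : 0 < κ)
    (hb : ∀ t ≥ 0, |g t| ≤ C * Real.exp (-κ * t)) :
    Continuous (fun τ : ℝ => ∫ t in Ioi 0, Real.cos (τ * t) * g t) := by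
  refine MeasureTheory.continuous_of_dominated (bound := fun t => C * Real.exp (-κ * t))
    (fun τ => cos_meas hg τ) (fun τ => ?_) (exp_int hκ 0) ?_
  · refine (MeasureTheory.ae_restrict_iff' measurableSet_Ioi).2 (Filter.Eventually.of_forall ?_)
    intro t ht
    exact cos_bd _ _ _ _ (hb t (le_of_lt ht))
  · refine Filter.Eventually.of_forall fun t => ?_
    fun_prop

/-- cosine transform -/
noncomputable def ct (u : ℝ → ℝ → ℝ) (τ x : ℝ) : ℝ := ∫ t in Ioi 0, Real.cos (τ * t) * u t x

section
variable {c0 : ℝ} {c f : ℝ → ℝ} {u ut ux utt uxx : ℝ → ℝ → ℝ} {C κ : ℝ}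

lemma WData.ct_cont {v : ℝ → ℝ → ℝ} (hv : ContinuousOn (Function.uncurry v) (Ici 0 ×ˢ Ici 0))
    (hκ : 0 < κ) (bv : ∀ t ≥ 0, ∀ x ∈ Icc (0:ℝ) 1, |v t x| ≤ C * Real.exp (-κ * t)) (τ : ℝ) :
    ContinuousOn (ct v τ) (Icc 0 1) := by
  refine MeasureTheory.continuousOn_of_dominated (bound := fun t => C * Real.exp (-κ * t))
    (fun x hx => cos_meas (slice_ct hv hx.1) τ) (fun x hx => ?_) (exp_int hκ 0) ?_
  · refine (MeasureTheory.ae_restrict_iff' measurableSet_Ioi).2 (Filter.Eventually.of_forall ?_)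
    intro t ht
    exact cos_bd _ _ _ _ (bv t (le_of_lt ht) x hx)
  · refine (MeasureTheory.ae_restrict_iff' measurableSet_Ioi).2 (Filter.Eventually.of_forall ?_)
    intro t ht
    exact continuousOn_const.mul ((slice_cx hv (le_of_lt ht)).mono Icc_subset_Ici_self)

lemma WData.ct_d0 (h : WData c0 c f u ut ux utt uxx C κ) (τ : ℝ) {x : ℝ} (hx : x ∈ Ioo (0:ℝ) 1) :
    HasDerivAt (ct u τ) (ct ux τ x) x := by
  refine (hasDerivAt_integral_of_dominated_loc_of_deriv_le
    (bound := fun t => C * Real.exp (-κ * t)) (F' := fun x t => Real.cos (τ * t) * ux t x)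
    (Ioo_mem_nhds hx.1 hx.2) ?_ ?_ ?_ ?_ (exp_int h.κ0 0) ?_).2
  · filter_upwards [Ioo_mem_nhds hx.1 hx.2] with y hy
    exact cos_meas (slice_ct h.cu hy.1.le) τ
  · exact cos_int (slice_ct h.cu hx.1.le) h.κ0 (fun t ht => h.bu t ht x ⟨hx.1.le, hx.2.le⟩) τ
  · exact cos_meas (slice_ct h.cux hx.1.le) τ
  · refine (MeasureTheory.ae_restrict_iff' measurableSet_Ioi).2 (Filter.Eventually.of_forall ?_)
    intro t ht y hy
    exact cos_bd _ _ _ _ (h.bux t (le_of_lt ht) y ⟨hy.1.le, hy.2.le⟩)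
  · refine (MeasureTheory.ae_restrict_iff' measurableSet_Ioi).2 (Filter.Eventually.of_forall ?_)
    intro t ht y hy
    exact ((h.dx t (le_of_lt ht) y hy.1.le).hasDerivAt (Ici_mem_nhds hy.1)).const_mul _

lemma WData.trunc_d (h : WData c0 c f u ut ux utt uxx C κ) (τ : ℝ) {T : ℝ} (hT : 0 ≤ T)
    {x : ℝ} (hx : x ∈ Ioo (0:ℝ) 1) :
    HasDerivAt (fun x => ∫ t in (0:ℝ)..T, Real.cos (τ * t) * ux t x)
      (∫ t in (0:ℝ)..T, Real.cos (τ * t) * uxx t x) x := by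
  have hsub : Icc 0 T ×ˢ Icc (0:ℝ) 1 ⊆ Ici (0:ℝ) ×ˢ Ici (0:ℝ) :=
    prod_mono Icc_subset_Ici_self Icc_subset_Ici_self
  obtain ⟨B, hB⟩ := (isCompact_Icc.prod isCompact_Icc).exists_bound_of_continuousOn
    (h.cuxx.mono hsub)
  have hu : uIoc 0 T = Ioc 0 T := uIoc_of_le hT
  have hm : ∀ {v : ℝ → ℝ}, ContinuousOn v (Ici 0) →
      MeasureTheory.AEStronglyMeasurable (fun t => Real.cos (τ * t) * v t)
      (MeasureTheory.volume.restrict (uIoc 0 T)) := by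
    intro v hv
    rw [hu]
    exact ((cos_cont hv τ).mono (Ioc_subset_Ioi_self.trans Ioi_subset_Ici_self)).aestronglyMeasurable
      measurableSet_Ioc
  refine (intervalIntegral.hasDerivAt_integral_of_dominated_loc_of_deriv_le
    (bound := fun t => B) (F' := fun x t => Real.cos (τ * t) * uxx t x)
    (Ioo_mem_nhds hx.1 hx.2) ?_ ?_ ?_ ?_ ?_ ?_).2
  · filter_upwards [Ioo_mem_nhds hx.1 hx.2] with y hy
    exact hm (slice_ct h.cux hy.1.le)
  · refine ContinuousOn.intervalIntegrable ?_
    rw [uIcc_of_le hT]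
    exact (cos_cont (slice_ct h.cux hx.1.le) τ).mono Icc_subset_Ici_self
  · exact hm (slice_ct h.cuxx hx.1.le)
  · refine Filter.Eventually.of_forall fun t ht y hy => ?_
    rw [hu] at ht
    exact cos_bd _ _ _ _ (hB (t, y) ⟨⟨ht.1.le, ht.2⟩, ⟨hy.1.le, hy.2.le⟩⟩)
  · exact intervalIntegrable_const
  · refine Filter.Eventually.of_forall fun t ht y hy => ?_
    rw [hu] at ht
    exact ((h.dxx t ht.1.le y hy.1.le).hasDerivAt (Ici_mem_nhds hy.1)).const_mul _

lemma WData.trunc_eq (h : WData c0 c f u ut ux utt uxx C κ) (τ : ℝ) {T : ℝ} (hT : 0 ≤ T)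
    (hcos : Real.cos (τ * T) = 0) {x : ℝ} (hx : x ∈ Ioo (0:ℝ) 1) (hcx : 0 < c x) :
    (∫ t in (0:ℝ)..T, Real.cos (τ * t) * uxx t x)
      = 1 / (c x)^2 * (τ * Real.sin (τ * T) * u T x
          - τ^2 * ∫ t in (0:ℝ)..T, Real.cos (τ * t) * u t x) := by
  have cI : ∀ {v : ℝ → ℝ}, ContinuousOn v (Ici 0) →
      IntervalIntegrable (fun t => Real.cos (τ * t) * v t) MeasureTheory.volume 0 T := by
    intro v hv
    refine ContinuousOn.intervalIntegrable ?_
    rw [uIcc_of_le hT]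
    exact (cos_cont hv τ).mono Icc_subset_Ici_self
  have scu := slice_ct h.cu hx.1.le
  have scut := slice_ct h.cut hx.1.le
  have scutt := slice_ct h.cutt hx.1.le
  have F : ∫ t in (0:ℝ)..T, (Real.cos (τ * t) * utt t x + τ^2 * (Real.cos (τ * t) * u t x))
      = (Real.cos (τ * T) * ut T x + τ * Real.sin (τ * T) * u T x)
        - (Real.cos (τ * 0) * ut 0 x + τ * Real.sin (τ * 0) * u 0 x) := by
    refine intervalIntegral.integral_eq_sub_of_hasDerivAt_of_le
      (f := fun t => Real.cos (τ * t) * ut t x + τ * Real.sin (τ * t) * u t x) hT ?_ ?_ ?_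
    · have k1 : Continuous (fun t => τ * Real.sin (τ * t)) := by fun_prop
      exact ((cos_cont scut τ).add (k1.continuousOn.mul scu)).mono Icc_subset_Ici_self
    · intro t ht
      have k0 : HasDerivAt (fun t : ℝ => τ * t) τ t := by simpa using (hasDerivAt_id t).const_mul τ
      have k1 := (h.dt t ht.1.le x hx.1.le).hasDerivAt (Ici_mem_nhds ht.1)
      have k2 := (h.dtt t ht.1.le x hx.1.le).hasDerivAt (Ici_mem_nhds ht.1)
      have k3 := (k0.cos.mul k2).add ((k0.sin.const_mul τ).mul k1)
      refine k3.congr_deriv ?_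
      ring
    · exact (cI scutt).add ((cI scu).const_mul _)
  rw [intervalIntegral.integral_add (cI scutt) ((cI scu).const_mul _),
    intervalIntegral.integral_const_mul, hcos, h.init' x hx.1.le] at F
  have G : (∫ t in (0:ℝ)..T, Real.cos (τ * t) * uxx t x)
      = 1 / (c x)^2 * ∫ t in (0:ℝ)..T, Real.cos (τ * t) * utt t x := by
    rw [← intervalIntegral.integral_const_mul]
    rw [intervalIntegral.integral_of_le hT, intervalIntegral.integral_of_le hT]
    refine MeasureTheory.setIntegral_congr_fun measurableSet_Ioc ?_
    intro t ht
    simp only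
    rw [h.pde t ht.1 x hx.1]
    field_simp
  rw [G]
  congr 1
  simp at F
  linarith

lemma WData.ct_sol (h : WData c0 c f u ut ux utt uxx C κ) {r : ℝ → ℝ}
    (hr : ∀ x ∈ Ioo (0:ℝ) 1, r x = 1 / (c x)^2) (hcx : ∀ x ∈ Ioo (0:ℝ) 1, 0 < c x) {B : ℝ}
    (hB : ∀ x ∈ Ioo (0:ℝ) 1, |r x| ≤ B) {τ : ℝ} (hτ : 0 < τ) :
    Sol r (-τ^2) (ct u τ) (ct ux τ) := by
  have C0 := h.C0
  have κ0 := h.κ0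
  refine ⟨WData.ct_cont h.cu h.κ0 h.bu τ, WData.ct_cont h.cux h.κ0 h.bux τ,
    fun x hx => h.ct_d0 τ hx, ?_⟩
  intro x hx
  set T : ℕ → ℝ := fun n => (n + 1/2) * Real.pi / τ with hTd
  have hpi := Real.pi_pos
  have T0 : ∀ n, 0 ≤ T n := fun n => by simp only [hTd]; positivity
  have Tcos : ∀ n, Real.cos (τ * T n) = 0 := by
    intro n
    rw [Real.cos_eq_zero_iff]
    refine ⟨n, ?_⟩
    simp only [hTd]
    push_cast
    field_simp
  have Tlim : Filter.Tendsto T Filter.atTop Filter.atTop := by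
    have k : Filter.Tendsto (fun n : ℕ => (n:ℝ) + 1/2) Filter.atTop Filter.atTop :=
      Filter.tendsto_atTop_add_const_right _ _ tendsto_natCast_atTop_atTop
    exact (k.atTop_mul_const hpi).atTop_div_const hτ
  have B0 : 0 ≤ B := (abs_nonneg _).trans (hB x hx)
  refine hasDerivAt_of_tendstoUniformlyOn (l := Filter.atTop)
    (f := fun n x => ∫ t in (0:ℝ)..T n, Real.cos (τ * t) * ux t x)
    (f' := fun n x => ∫ t in (0:ℝ)..T n, Real.cos (τ * t) * uxx t x)
    (g' := fun x => -τ^2 * r x * ct u τ x) isOpen_Ioo ?_ ?_ ?_ hx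
  · have lim : Filter.Tendsto (fun n => B * (τ * C + τ^2 * (C / κ)) * Real.exp (-κ * T n))
        Filter.atTop (nhds 0) := by
      have k : Filter.Tendsto (fun n => -κ * T n) Filter.atTop Filter.atBot := by
        have := Tlim.const_mul_atTop_of_neg (neg_lt_zero.2 κ0)
        exact this
      have := (Real.tendsto_exp_atBot.comp k).const_mul (B * (τ * C + τ^2 * (C / κ)))
      simpa using this
    rw [Metric.tendstoUniformlyOn_iff]
    intro ε hε
    filter_upwards [lim.eventually (gt_mem_nhds hε)] with n hn y hy
    refine lt_of_le_of_lt ?_ hn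
    have hy' : y ∈ Icc (0:ℝ) 1 := ⟨hy.1.le, hy.2.le⟩
    rw [dist_comm, Real.dist_eq, h.trunc_eq τ (T0 n) (Tcos n) hy (hcx y hy), ← hr y hy]
    have tl := cos_tail (slice_ct h.cu hy.1.le) κ0 (fun t ht => h.bu t ht y hy') τ (T0 n)
    have b1 := h.bu (T n) (T0 n) y hy'
    set I := ∫ t in (0:ℝ)..T n, Real.cos (τ * t) * u t y
    change |I - ct u τ y| ≤ _ at tl
    have e : r y * (τ * Real.sin (τ * T n) * u (T n) y - τ^2 * I) - (-τ^2 * r y * ct u τ y)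
        = r y * (τ * (Real.sin (τ * T n) * u (T n) y) - τ^2 * (I - ct u τ y)) := by ring
    rw [e, abs_mul]
    have b2 : |Real.sin (τ * T n) * u (T n) y| ≤ C * Real.exp (-κ * T n) := by
      rw [abs_mul]
      calc _ ≤ 1 * |u (T n) y| :=
            mul_le_mul_of_nonneg_right (Real.abs_sin_le_one _) (abs_nonneg _)
        _ ≤ _ := by linarith
    have b3 : |τ * (Real.sin (τ * T n) * u (T n) y) - τ^2 * (I - ct u τ y)|
        ≤ τ * (C * Real.exp (-κ * T n)) + τ^2 * (C * (Real.exp (-κ * T n) / κ)) := by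
      refine (abs_sub _ _).trans ?_
      rw [abs_mul τ, abs_mul (τ^2), abs_of_pos hτ, abs_of_pos (pow_pos hτ 2)]
      gcongr
    calc _ ≤ B * (τ * (C * Real.exp (-κ * T n)) + τ^2 * (C * (Real.exp (-κ * T n) / κ))) :=
          mul_le_mul (hB y hy) b3 (abs_nonneg _) B0
      _ = _ := by ring
  · exact Filter.Eventually.of_forall fun n y hy => h.trunc_d τ (T0 n) hy
  · intro y hy
    exact MeasureTheory.intervalIntegral_tendsto_integral_Ioi 0
      (cos_int (slice_ct h.cux hy.1.le) κ0 (fun t ht => h.bux t ht y ⟨hy.1.le, hy.2.le⟩) τ) Tlim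
end


lemma fourier_uniq {g : ℝ → ℝ} (hg : ContinuousOn g (Ici 0))
    (hi : MeasureTheory.IntegrableOn g (Ioi 0))
    (h0 : ∀ τ > 0, ∫ t in Ioi 0, Real.cos (τ * t) * g t = 0) : ∀ t ≥ 0, g t = 0 := by
  have hc : Continuous (fun t : ℝ => g |t|) :=
    hg.comp_continuous continuous_abs (fun t => abs_nonneg t)
  have hI : MeasureTheory.Integrable (fun t : ℝ => g |t|) := by
    have h1 : MeasureTheory.IntegrableOn (fun t : ℝ => g |t|) (Ioi 0) := by
      refine hi.congr_fun (fun t ht => ?_) measurableSet_Ioi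
      simp only [abs_of_pos (mem_Ioi.1 ht)]
    have h2 : MeasureTheory.IntegrableOn (fun t : ℝ => g |t|) (Iic 0) := by
      rw [← MeasureTheory.Measure.map_neg_eq_self (MeasureTheory.volume : MeasureTheory.Measure ℝ)]
      let m : MeasurableEmbedding fun x : ℝ => -x := (Homeomorph.neg ℝ).measurableEmbedding
      rw [m.integrableOn_map_iff]
      simp_rw [Function.comp_def, abs_neg, neg_preimage, neg_Iic, neg_zero]
      exact Iff.mpr integrableOn_Ici_iff_integrableOn_Ioi h1
    rw [← MeasureTheory.integrableOn_univ, ← Iic_union_Ioi (a := (0:ℝ))]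
    exact h2.union h1
  set F : ℝ → ℂ := fun t => ((g |t| : ℝ) : ℂ) with hF
  have Fc : Continuous F := Complex.continuous_ofReal.comp hc
  have FI : MeasureTheory.Integrable F := hI.ofReal
  have Fw : ∀ w : ℝ, w ≠ 0 → FourierTransform.fourier F w = 0 := by
    intro w hw
    rw [Real.fourier_real_eq_integral_exp_smul]
    set I : ℝ → ℂ := fun v => Complex.exp (↑(-2 * Real.pi * v * w) * Complex.I) • F v with hIdef
    have II : MeasureTheory.Integrable I := by
      refine FI.norm.mono' (by fun_prop) (Filter.Eventually.of_forall fun v => ?_)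
      simp only [hIdef, norm_smul, Complex.norm_exp_ofReal_mul_I, one_mul, le_refl]
    have e1 : ∫ v, I (-v) = ∫ v, I v := MeasureTheory.integral_neg_eq_self I MeasureTheory.volume
    have e2 : ∀ v, I v + I (-v)
        = ((2 * (Real.cos ((2 * Real.pi * |w|) * |v|) * g |v|) : ℝ) : ℂ) := by
      intro v
      have k : Real.cos ((2 * Real.pi * |w|) * |v|) = Real.cos (2 * Real.pi * v * w) := by
        rw [← Real.cos_abs (2 * Real.pi * v * w)]
        congr 1
        rw [abs_mul, abs_mul, abs_of_pos Real.two_pi_pos]; ring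
      rw [k]
      simp only [hIdef, hF, abs_neg, smul_eq_mul]
      have k2 : ((-2 * Real.pi * v * w : ℝ) : ℂ) * Complex.I
        = -((2 * Real.pi * v * w : ℝ) : ℂ) * Complex.I := by push_cast; ring
      have k3 : ((-2 * Real.pi * (-v) * w : ℝ) : ℂ) * Complex.I
        = ((2 * Real.pi * v * w : ℝ) : ℂ) * Complex.I := by push_cast; ring
      rw [k2, k3]
      rw [Complex.ofReal_mul 2, Complex.ofReal_mul (Real.cos _), Complex.ofReal_cos]
      generalize ((2 * Real.pi * v * w : ℝ) : ℂ) = a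
      have := Complex.two_cos a
      push_cast
      linear_combination (-(g |v| : ℂ)) * this
    have e3 : ∫ v, (I v + I (-v)) = 0 := by
      simp_rw [e2]
      rw [integral_complex_ofReal, MeasureTheory.integral_const_mul,
        integral_comp_abs (f := fun v => Real.cos ((2 * Real.pi * |w|) * v) * g v),
        h0 _ (mul_pos Real.two_pi_pos (abs_pos.2 hw))]
      simp
    rw [MeasureTheory.integral_add II II.comp_neg, e1] at e3
    have : (2:ℂ) * ∫ v, I v = 0 := by rw [two_mul]; exact e3
    simpa using this
  have ae : FourierTransform.fourier F =ᵐ[MeasureTheory.volume] (0 : ℝ → ℂ) := by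
    have : ∀ᵐ w : ℝ, w ≠ 0 := by
      simp [MeasureTheory.ae_iff]
    filter_upwards [this] with w hw
    exact Fw w hw
  have inv := Fc.fourierInv_fourier_eq FI ((MeasureTheory.integrable_zero _ _ _).congr ae.symm)
  intro t ht
  have := congrFun inv t
  rw [Real.fourierInv_eq'] at this
  rw [MeasureTheory.integral_congr_ae (g := fun _ => (0:ℂ))] at this
  · simp only [MeasureTheory.integral_zero, hF, abs_of_nonneg ht] at this
    exact_mod_cast this.symm
  · filter_upwards [ae] with w hw
    rw [hw]; simp


lemma spd_of {c0 : ℝ} {c : ℝ → ℝ} (hc : IsWaveSpeed c0 c) :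
    ∃ m > 0, ∃ M K : ℝ, 0 ≤ K ∧ ∀ m' > 0, m' ≤ m → ∀ M' ≥ M, ∀ K' ≥ K,
      Spd (fun x => c (max x 0)) (derivWithin c (Ici 0)) m' M' K' := by
  obtain ⟨h2, hp, ho⟩ := hc
  have cc : Continuous (fun x => c (max x 0)) :=
    h2.continuousOn.comp_continuous (by fun_prop) (fun x => mem_Ici.2 (le_max_right _ _))
  have cI : ContinuousOn c (Icc 0 1) := h2.continuousOn.mono Icc_subset_Ici_self
  have dI : ContinuousOn (derivWithin c (Ici 0)) (Icc 0 1) :=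
    (h2.continuousOn_derivWithin (uniqueDiffOn_Ici 0) (by norm_num)).mono Icc_subset_Ici_self
  have ne : (Icc (0:ℝ) 1).Nonempty := ⟨0, by simp⟩
  obtain ⟨a, ha, hmin⟩ := isCompact_Icc.exists_isMinOn ne cI
  obtain ⟨b, hb, hmax⟩ := isCompact_Icc.exists_isMaxOn ne cI
  have qI : ContinuousOn (fun x => derivWithin c (Ici 0) x / c x) (Icc 0 1) :=
    dI.div cI (fun x hx => (hp x hx.1).ne')
  obtain ⟨K, hK⟩ := isCompact_Icc.exists_bound_of_continuousOn qI
  have red : ∀ x : ℝ, ∃ y ∈ Icc (0:ℝ) 1, c (max x 0) = c y := by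
    intro x
    rcases le_total (max x 0) 1 with h | h
    · exact ⟨max x 0, ⟨le_max_right _ _, h⟩, rfl⟩
    · refine ⟨1, by simp, ?_⟩
      rw [ho _ (mem_Ici.2 (le_max_right _ _)) (fun k => absurd k.2 (not_lt.2 h)),
        ho 1 (by simp) (by simp)]
  refine ⟨c a, hp a ha.1, c b, K, (norm_nonneg _).trans (hK a ha), ?_⟩
  intro m' hm' hm M' hM K' hK'
  refine ⟨cc, hm', ?_, ?_, ?_, ?_, ((norm_nonneg _).trans (hK a ha)).trans hK'⟩
  · intro x
    obtain ⟨y, hy, e⟩ := red x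
    simp only [e]
    exact hm.trans (hmin hy)
  · intro x
    obtain ⟨y, hy, e⟩ := red x
    simp only [e]
    exact le_trans (hmax hy) hM
  · intro x hx
    have k := ((h2.differentiableOn (by norm_num)) x hx.1.le).hasDerivWithinAt.hasDerivAt
      (Ici_mem_nhds hx.1)
    refine k.congr_of_eventuallyEq ?_
    filter_upwards [Ioi_mem_nhds hx.1] with y hy
    rw [max_eq_left (le_of_lt hy)]
  · intro x hx
    simp only [max_eq_left hx.1.le]
    exact (hK x ⟨hx.1.le, hx.2.le⟩).trans hK'

/-- Representation of a solution by its Cauchy data at `1`. -/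
lemma Sol.rep {r y y' θ θ' φ φ' : ℝ → ℝ} {z : ℝ} (h : Sol r z y y') (hθ : Sol r z θ θ')
    (hφ : Sol r z φ φ') (a1 : θ 1 = 1) (a2 : θ' 1 = 0) (a3 : φ 1 = 0) (a4 : φ' 1 = 1) :
    ∀ x ∈ Icc (0:ℝ) 1, y x = y 1 * θ x + y' 1 * φ x := by
  intro x hx
  have w1 := h.wronsk hφ x hx
  have w2 := h.wronsk hθ x hx
  have w3 := hθ.wronsk hφ x hx
  rw [a3, a4] at w1
  rw [a1, a2] at w2
  rw [a1, a2, a3, a4] at w3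
  linear_combination θ x * w1 - φ x * w2 - y x * w3

lemma ct_uniq {u : ℝ → ℝ} (hu : ContinuousOn u (Ici 0)) {C κ : ℝ} (hκ : 0 < κ)
    (hb : ∀ t ≥ 0, |u t| ≤ C * Real.exp (-κ * t)) {v : ℝ → ℝ} (hv : ContinuousOn v (Ici 0))
    {C' κ' : ℝ} (hκ' : 0 < κ') (hb' : ∀ t ≥ 0, |v t| ≤ C' * Real.exp (-κ' * t))
    (h : ∀ τ > 0, ∫ t in Ioi 0, Real.cos (τ * t) * u t = ∫ t in Ioi 0, Real.cos (τ * t) * v t) :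
    ∀ t ≥ 0, u t = v t := by
  have key := fourier_uniq (g := fun t => u t - v t) (hu.sub hv) ?_ ?_
  · intro t ht
    exact sub_eq_zero.1 (key t ht)
  · have i1 := cos_int hu hκ hb 0
    have i2 := cos_int hv hκ' hb' 0
    have := i1.sub i2
    simpa using! this
  · intro τ hτ
    have i1 := cos_int hu hκ hb τ
    have i2 := cos_int hv hκ' hb' τ
    simp only [mul_sub]
    rw [MeasureTheory.integral_sub i1 i2, h τ hτ, sub_self]

theorem statement0
    (c0 : ℝ) (hc0 : 0 < c0)
    (c₁ c₂ f₁ f₂ : ℝ → ℝ) (u₁ u₂ : ℝ → ℝ → ℝ)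
    (hc₁ : IsWaveSpeed c0 c₁) (hc₂ : IsWaveSpeed c0 c₂)
    (hf₁C : ContDiffOn ℝ 2 f₁ (Ici 0)) (hf₂C : ContDiffOn ℝ 2 f₂ (Ici 0))
    (hf₁0 : ∃ x ∈ Ici (0:ℝ), f₁ x ≠ 0) (hf₂0 : ∃ x ∈ Ici (0:ℝ), f₂ x ≠ 0)
    (hs₁ : ∀ x ∈ Ici (0:ℝ), x ∉ Ioo (0:ℝ) 1 → f₁ x = 0)
    (hs₂ : ∀ x ∈ Ici (0:ℝ), x ∉ Ioo (0:ℝ) 1 → f₂ x = 0)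
    (hu₁ : IsWaveSolution c₁ f₁ u₁) (hu₂ : IsWaveSolution c₂ f₂ u₂)
    (hd₁ : DecaysExp u₁) (hd₂ : DecaysExp u₂)
    (hmeas : ∀ t ∈ Ici (0:ℝ), u₁ t 1 = u₂ t 1) :
    EqOn f₁ f₂ (Ici 0) ∧ EqOn c₁ c₂ (Ici 0) := by
  obtain ⟨ut₁, ux₁, utt₁, uxx₁, C₁, κ₁, W₁⟩ := wdata hc0 hc₁ hs₁ hu₁ hd₁
  obtain ⟨ut₂, ux₂, utt₂, uxx₂, C₂, κ₂, W₂⟩ := wdata hc0 hc₂ hs₂ hu₂ hd₂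
  obtain ⟨m₁, hm₁, M₁, K₁, hK₁, S₁⟩ := spd_of hc₁
  obtain ⟨m₂, hm₂, M₂, K₂, hK₂, S₂⟩ := spd_of hc₂
  have P₁ := S₁ (min m₁ m₂) (lt_min hm₁ hm₂) (min_le_left _ _) (max M₁ M₂) (le_max_left _ _)
    (max K₁ K₂) (le_max_left _ _)
  have P₂ := S₂ (min m₁ m₂) (lt_min hm₁ hm₂) (min_le_right _ _) (max M₁ M₂) (le_max_right _ _)
    (max K₁ K₂) (le_max_right _ _)
  set m := min m₁ m₂
  set e₁ : ℝ → ℝ := fun x => c₁ (max x 0) with he₁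
  set e₂ : ℝ → ℝ := fun x => c₂ (max x 0) with he₂
  set r₁ : ℝ → ℝ := fun x => 1 / (e₁ x)^2 with hr₁
  set r₂ : ℝ → ℝ := fun x => 1 / (e₂ x)^2 with hr₂
  have hx1 : (1:ℝ) ∈ Icc (0:ℝ) 1 := by simp
  have hx0 : (0:ℝ) ∈ Icc (0:ℝ) 1 := by simp
  have sol₁ : ∀ τ > 0, Sol r₁ (-τ^2) (ct u₁ τ) (ct ux₁ τ) := fun τ hτ =>
    W₁.ct_sol (B := (1/m)^2) (fun x hx => by simp only [hr₁, he₁, max_eq_left hx.1.le])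
      (fun x hx => hc₁.2.1 x hx.1.le) (fun x hx => P₁.r_bd x ⟨hx.1.le, hx.2.le⟩) hτ
  have sol₂ : ∀ τ > 0, Sol r₂ (-τ^2) (ct u₂ τ) (ct ux₂ τ) := fun τ hτ =>
    W₂.ct_sol (B := (1/m)^2) (fun x hx => by simp only [hr₂, he₂, max_eq_left hx.1.le])
      (fun x hx => hc₂.2.1 x hx.1.le) (fun x hx => P₂.r_bd x ⟨hx.1.le, hx.2.le⟩) hτ
  have rep₁ : ∀ τ > 0, ∀ x ∈ Icc (0:ℝ) 1, ct u₁ τ x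
      = ct u₁ τ 1 * psR r₁ 1 0 (-τ^2) x + ct ux₁ τ 1 * psR r₁ 0 1 (-τ^2) x := by
    intro τ hτ
    obtain ⟨s1, s2, s3⟩ := ps_sol P₁.r_cont 1 0 P₁.r_bd (-τ^2)
    obtain ⟨t1, t2, t3⟩ := ps_sol P₁.r_cont 0 1 P₁.r_bd (-τ^2)
    exact (sol₁ τ hτ).rep s1 t1 s2 s3 t2 t3
  have rep₂ : ∀ τ > 0, ∀ x ∈ Icc (0:ℝ) 1, ct u₂ τ x
      = ct u₂ τ 1 * psR r₂ 1 0 (-τ^2) x + ct ux₂ τ 1 * psR r₂ 0 1 (-τ^2) x := by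
    intro τ hτ
    obtain ⟨s1, s2, s3⟩ := ps_sol P₂.r_cont 1 0 P₂.r_bd (-τ^2)
    obtain ⟨t1, t2, t3⟩ := ps_sol P₂.r_cont 0 1 P₂.r_bd (-τ^2)
    exact (sol₂ τ hτ).rep s1 t1 s2 s3 t2 t3
  -- equality of the Cauchy data
  have eA : ∀ τ, ct u₁ τ 1 = ct u₂ τ 1 := by
    intro τ
    refine MeasureTheory.setIntegral_congr_fun measurableSet_Ioi ?_
    intro t ht
    simp only
    rw [hmeas t (mem_Ici.2 (le_of_lt ht))]
  have eB : ∀ τ, ct ux₁ τ 1 = ct ux₂ τ 1 := by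
    intro τ
    refine MeasureTheory.setIntegral_congr_fun measurableSet_Ioi ?_
    intro t ht
    have ht0 : 0 ≤ t := le_of_lt ht
    simp only
    have d1 := W₁.dt t ht0 1 zero_le_one
    have d2 := W₂.dt t ht0 1 zero_le_one
    have d3 : HasDerivWithinAt (fun s => u₂ s 1) (ut₁ t 1) (Ici 0) t :=
      d1.congr (fun s hs => (hmeas s hs).symm) (hmeas t ht0).symm
    have e : ut₁ t 1 = ut₂ t 1 := (uniqueDiffOn_Ici 0 t ht0).eq_deriv _ d3 d2
    have o1 := W₁.out t ht0
    have o2 := W₂.out t ht0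
    have : c0 * ux₁ t 1 = c0 * ux₂ t 1 := by linarith
    rw [mul_left_cancel₀ hc0.ne' this]
  have z₁ : ∀ τ, ct u₁ τ 0 = 0 := by
    intro τ
    have : ct u₁ τ 0 = ∫ t in Ioi (0:ℝ), (0:ℝ) := by
      refine MeasureTheory.setIntegral_congr_fun measurableSet_Ioi ?_
      intro t ht
      simp only
      rw [W₁.bdry t (le_of_lt ht), mul_zero]
    rw [this]; simp
  have z₂ : ∀ τ, ct u₂ τ 0 = 0 := by
    intro τ
    have : ct u₂ τ 0 = ∫ t in Ioi (0:ℝ), (0:ℝ) := by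
      refine MeasureTheory.setIntegral_congr_fun measurableSet_Ioi ?_
      intro t ht
      simp only
      rw [W₂.bdry t (le_of_lt ht), mul_zero]
    rw [this]; simp
  have cA : Continuous (fun τ => ct u₁ τ 1) :=
    cos_transform_cont (slice_ct W₁.cu zero_le_one) W₁.κ0 (fun t ht => W₁.bu t ht 1 hx1)
  have cB : Continuous (fun τ => ct ux₁ τ 1) :=
    cos_transform_cont (slice_ct W₁.cux zero_le_one) W₁.κ0 (fun t ht => W₁.bux t ht 1 hx1)
  -- nontrivial data
  have non : ∃ τ₀ > 0, (ct u₁ τ₀ 1)^2 + (ct ux₁ τ₀ 1)^2 ≠ 0 := by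
    by_contra hcon
    push Not at hcon
    have zz : ∀ τ > 0, ∀ x ∈ Icc (0:ℝ) 1, ct u₁ τ x = 0 := by
      intro τ hτ x hx
      have q := hcon τ hτ
      have qa : ct u₁ τ 1 = 0 := by nlinarith [sq_nonneg (ct u₁ τ 1), sq_nonneg (ct ux₁ τ 1)]
      have qb : ct ux₁ τ 1 = 0 := by nlinarith [sq_nonneg (ct u₁ τ 1), sq_nonneg (ct ux₁ τ 1)]
      rw [rep₁ τ hτ x hx, qa, qb]; ring
    obtain ⟨x, hx, hfx⟩ := hf₁0
    have hxI : x ∈ Ioo (0:ℝ) 1 := by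
      by_contra hn
      exact hfx (hs₁ x hx hn)
    have hxc : x ∈ Icc (0:ℝ) 1 := ⟨hxI.1.le, hxI.2.le⟩
    refine hfx ?_
    rw [← W₁.init x hx]
    have := ct_uniq (slice_ct W₁.cu hx) W₁.κ0 (fun t ht => W₁.bu t ht x hxc)
      (v := fun _ => 0) continuousOn_const (C' := 0) (κ' := 1) one_pos (by simp)
      (fun τ hτ => by
        have := zz τ hτ x hxc
        unfold ct at this
        rw [this]; simp)
    exact this 0 le_rfl
  obtain ⟨τ₀, hτ₀, hnz⟩ := non
  have det : ∀ᶠ τ in nhds τ₀, psR r₁ 1 0 (-τ^2) 0 * psR r₂ 0 1 (-τ^2) 0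
      = psR r₂ 1 0 (-τ^2) 0 * psR r₁ 0 1 (-τ^2) 0 := by
    have cAB : Continuous (fun τ => (ct u₁ τ 1)^2 + (ct ux₁ τ 1)^2) := by fun_prop
    filter_upwards [Ioi_mem_nhds hτ₀, cAB.continuousAt.eventually_ne hnz] with τ hτ hne
    have q1 := rep₁ τ hτ 0 hx0
    have q2 := rep₂ τ hτ 0 hx0
    rw [z₁] at q1
    rw [z₂, ← eA, ← eB] at q2
    refine sub_eq_zero.1 ?_
    refine (mul_eq_zero.1 (?_ : ((ct u₁ τ 1)^2 + (ct ux₁ τ 1)^2) * _ = 0)).resolve_left hne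
    set A := ct u₁ τ 1
    set B := ct ux₁ τ 1
    linear_combination (-(A * psR r₂ 0 1 (-τ^2) 0) + B * psR r₂ 1 0 (-τ^2) 0) * q1 +
      (A * psR r₁ 0 1 (-τ^2) 0 - B * psR r₁ 1 0 (-τ^2) 0) * q2
  have ceq := key_speed P₁ P₂ (det_ext P₁ P₂ det)
  have hcEq : EqOn c₁ c₂ (Ici 0) := by
    intro x hx
    by_cases hxI : x ∈ Ioo (0:ℝ) 1
    · have := ceq x hxI
      simpa only [he₁, he₂, max_eq_left hxI.1.le] using this
    · rw [hc₁.2.2 x hx hxI, hc₂.2.2 x hx hxI]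
  have hr : r₁ = r₂ := by
    funext x
    simp only [hr₁, hr₂, he₁, he₂]
    rw [hcEq (le_max_right x 0 : (0:ℝ) ≤ max x 0)]
  refine ⟨?_, hcEq⟩
  intro x hx
  by_cases hxI : x ∈ Ioo (0:ℝ) 1
  · have hxc : x ∈ Icc (0:ℝ) 1 := ⟨hxI.1.le, hxI.2.le⟩
    rw [← W₁.init x hx, ← W₂.init x hx]
    refine ct_uniq (slice_ct W₁.cu hx) W₁.κ0 (fun t ht => W₁.bu t ht x hxc)
      (slice_ct W₂.cu hx) W₂.κ0 (fun t ht => W₂.bu t ht x hxc) ?_ 0 le_rfl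
    intro τ hτ
    have q1 := rep₁ τ hτ x hxc
    have q2 := rep₂ τ hτ x hxc
    rw [← hr, ← eA, ← eB, ← q1] at q2
    exact q2.symm
  · rw [hs₁ x hx hxI, hs₂ x hx hxI]
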